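/- arXiv:2003.10069 — 2 statements merged into one kernel-verified Lean document; each statement's English description precedes it below -/
import Mathlib

section
/- There is an absolute constant C > 0 such that the following holds. Fix η > 0 and ε ∈ (0,1), and let E ⊆ ℝ^d be a finite set with |E| = n. Let k ≥ C log(4n/η), and suppose Φ ∈ ℝ^{m×d} satisfies the Restricted Isometry Property of order k and level δ for some δ ≤ ε/4. Let ξ be a uniform random vector in {±1}^d conditioned on ∏_{i=1}^d ξ_i = 1, and let D_ξ be the d×d diagonal matrix with diagonal ξ. Then with probability at least 1 − η, (1−ε)‖x‖₂² ≤ ‖Φ D_ξ x‖₂² ≤ (1+ε)‖x‖₂² holds simultaneously for all x ∈ E. -/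
noncomputable section

open MeasureTheory Real
open scoped ENNReal

namespace KacJL

/-- The Euclidean norm on `ℝ^d`. -/
def l2norm {d : ℕ} (x : Fin d → ℝ) : ℝ := Real.sqrt (∑ i, x i ^ 2)

/-- The restricted isometry constant `δ_s(A)` of a matrix `A`. -/
def ripConst {m d : ℕ} (A : Matrix (Fin m) (Fin d) ℝ) (s : ℕ) : ℝ :=
  sSup {r : ℝ | ∃ x : Fin d → ℝ, l2norm x = 1 ∧
    (Finset.univ.filter fun i => x i ≠ 0).card ≤ s ∧ r = |l2norm (A.mulVec x) ^ 2 - 1|}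

/-- The uniform distribution on sign vectors `ξ ∈ {±1}^d` conditioned on `∏ i ξ_i = 1`. -/
def signMeasure (d : ℕ) : Measure (Fin d → ℝ) :=
  ((2 ^ (d - 1) : ℕ) : ℝ≥0∞)⁻¹ •
    (Measure.count.restrict
      {v : Fin d → ℝ | (∀ i, v i = 1 ∨ v i = -1) ∧ ∏ i, v i = 1})

/-!
Cut the coordinates into blocks of size about `k / 2` following a decreasing rearrangement of `|x|`.
In the quadratic form `‖Φ D_ξ x‖² = ξᵀ Gξ`, where `G` is the Gram matrix of `Φ D_x`, the
restricted isometry property controls the diagonal blocks for every `ξ`, so only the interactions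
between distinct blocks are random. Those with the first block form a bilinear chaos in two
independent groups of signs, with a deterministic variance bound once one group is fixed, and are
handled by Hoeffding's estimate. In the remaining ones every entry of `x` is small compared to the
average over the preceding block, which makes the operator and Frobenius norms of that part of `G`
of order `δ ‖x‖² / s` and `δ ‖x‖² / √s`; decoupling and a self-bounding estimate for the moment
generating function of `‖Bξ‖²` then give an exponential tail. Conditioning on `∏ ξᵢ = 1`, an event
of probability at least one half, at most doubles the probabilities, and a union bound over the
point set finishes the proof.
-/

section Averages

open Finset
open scoped BigOperators

variable {α : Type*} [Fintype α]

lemma exp_expect_le_expect_exp [Nonempty α] (f : α → ℝ) : exp (𝔼 a, f a) ≤ 𝔼 a, exp (f a) := by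
  have h := convexOn_exp.map_sum_le (t := univ) (w := fun _ : α => (Fintype.card α : ℝ)⁻¹) (p := f)
    (fun _ _ => by positivity) (by simp) fun _ _ => Set.mem_univ _
  simpa only [Fintype.expect_eq_sum_div_card, div_eq_inv_mul, mul_sum, smul_eq_mul] using h

lemma sq_expect_exp_half_le_expect_exp (f : α → ℝ) :
    (𝔼 a, exp (f a / 2)) ^ 2 ≤ 𝔼 a, exp (f a) := by
  rcases isEmpty_or_nonempty α with _ | _
  · simp
  calc (𝔼 a, exp (f a / 2)) ^ 2 = (𝔼 a, exp (f a / 2) * 1) ^ 2 := by simp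
    _ ≤ (𝔼 a, exp (f a / 2) ^ 2) * 𝔼 _a : α, (1 : ℝ) ^ 2 := expect_mul_sq_le_sq_mul_sq _ _ _
    _ = 𝔼 a, exp (f a) := by simp [← exp_nat_mul, mul_div_cancel₀]

lemma dens_le_exp_of_expect_exp_le {f : α → ℝ} {l A : ℝ} (hl : 0 ≤ l)
    (hf : 𝔼 a, exp (l * f a) ≤ exp A) (t : ℝ) :
    (dens {a | t ≤ f a} : ℝ) ≤ exp (A - l * t) := by
  have h : (dens {a | t ≤ f a} : ℝ) * exp (l * t) ≤ 𝔼 a, exp (l * f a) := by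
    rw [← expect_indicator_one, expect_mul]
    refine expect_le_expect fun a _ => ?_
    rcases le_or_gt t (f a) with ha | ha
    · simpa [ha] using mul_le_mul_of_nonneg_left ha hl
    · simp [ha.not_ge, exp_nonneg]
  rw [exp_sub, le_div_iff₀ (exp_pos _)]
  exact h.trans hf

lemma dens_abs_le_exp_of_expect_exp_le {f : α → ℝ} {l A : ℝ} (hl : 0 ≤ l)
    (hpos : 𝔼 a, exp (l * f a) ≤ exp A) (hneg : 𝔼 a, exp (-l * f a) ≤ exp A) (t : ℝ) :
    (dens {a | t ≤ |f a|} : ℝ) ≤ 2 * exp (A - l * t) := by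
  classical
  have hunion : (dens {a | t ≤ |f a|} : ℝ) ≤ dens {a | t ≤ f a} + dens {a | t ≤ -f a} := by
    simp only [le_abs, filter_or]
    exact_mod_cast dens_union_le _ _
  have hneg' : 𝔼 a, exp (l * -f a) ≤ exp A := by simpa using hneg
  linarith [dens_le_exp_of_expect_exp_le hl hpos t, dens_le_exp_of_expect_exp_le hl hneg' t]

end Averages

section Signs

open Finset Matrix
open scoped BigOperators

variable {ι : Type*}

/-- A choice of signs as a real vector. Random signs are modelled by averaging over the finite type
`ι → ℤˣ`, and probabilities by `Finset.dens`. -/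
def signVec (ξ : ι → ℤˣ) : ι → ℝ := fun i => ((ξ i : ℤ) : ℝ)

lemma signVec_mul_self (ξ : ι → ℤˣ) (i : ι) : signVec ξ i * signVec ξ i = 1 := by
  rcases Int.units_eq_one_or (ξ i) with h | h <;> simp [signVec, h]

lemma expect_exp_dotProduct_signVec_le [Fintype ι] [DecidableEq ι] (c : ι → ℝ) :
    𝔼 ξ : ι → ℤˣ, exp (c ⬝ᵥ signVec ξ) ≤ exp ((c ⬝ᵥ c) / 2) := by
  calc 𝔼 ξ : ι → ℤˣ, exp (c ⬝ᵥ signVec ξ)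
      = (∑ ξ : ι → ℤˣ, ∏ i, exp (c i * ((ξ i : ℤ) : ℝ))) / 2 ^ Fintype.card ι := by
        simp [Fintype.expect_eq_sum_div_card, dotProduct, exp_sum, signVec]
    _ = (∏ i, (exp (c i) + exp (-c i))) / 2 ^ Fintype.card ι := by
        rw [← Fintype.prod_sum fun i (u : ℤˣ) => exp (c i * ((u : ℤ) : ℝ))]
        simp
    _ = ∏ i, cosh (c i) := by simp [cosh_eq, prod_div_distrib]
    _ ≤ ∏ i, exp (c i ^ 2 / 2) :=
        prod_le_prod (fun i _ => (cosh_pos _).le) fun i _ => cosh_le_exp_half_sq _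
    _ = exp ((c ⬝ᵥ c) / 2) := by simp [← exp_sum, dotProduct, sum_div, sq]

lemma expect_expect_piecewise [Fintype ι] [DecidableEq ι] {β : Type*} [Fintype β] [Nonempty β]
    (S : Finset ι) (f : (ι → β) → ℝ) :
    𝔼 ω, 𝔼 ω', f (S.piecewise ω ω') = 𝔼 ω, f ω := by
  have hswap : Function.Involutive fun p : (ι → β) × (ι → β) =>
      (S.piecewise p.1 p.2, S.piecewise p.2 p.1) := fun p => by
    ext i <;> by_cases hi : i ∈ S <;> simp [hi]
  calc 𝔼 ω, 𝔼 ω', f (S.piecewise ω ω')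
      = 𝔼 p : (ι → β) × (ι → β), f (S.piecewise p.1 p.2) := (expect_product' _ _ _).symm
    _ = 𝔼 p : (ι → β) × (ι → β), f p.1 :=
        Fintype.expect_equiv hswap.toPerm _ _ fun _ => rfl
    _ = 𝔼 ω, 𝔼 _ω' : ι → β, f ω := expect_product' univ univ fun ω _ => f ω
    _ = 𝔼 ω, f ω := by simp [expect_const]

end Signs

section LinearAlgebra

open Finset Matrix
open scoped Matrix.Norms.L2Operator

variable {ι κ : Type*} [Fintype ι] [Fintype κ]

lemma dotProduct_mulVec_eq_sum (M : Matrix κ ι ℝ) (u : κ → ℝ) (v : ι → ℝ) :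
    u ⬝ᵥ M *ᵥ v = ∑ i, ∑ j, M i j * (u i * v j) := by
  simp only [dotProduct, mulVec, mul_sum]
  exact sum_congr rfl fun i _ => sum_congr rfl fun j _ => by ring

lemma dotProduct_transpose_mul_self_mulVec (B : Matrix κ ι ℝ) (u v : ι → ℝ) :
    u ⬝ᵥ (Bᵀ * B) *ᵥ v = B *ᵥ u ⬝ᵥ B *ᵥ v := by
  rw [← mulVec_mulVec, dotProduct_mulVec, vecMul_transpose]

lemma trace_transpose_mul_self (B : Matrix κ ι ℝ) : (Bᵀ * B).trace = ∑ k, ∑ i, B k i ^ 2 := by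
  simp only [trace, diag_apply, mul_apply, transpose_apply, ← sq]
  exact sum_comm

lemma dotProduct_self_nonneg (v : ι → ℝ) : 0 ≤ v ⬝ᵥ v := by
  simpa using dotProduct_self_star_nonneg v

lemma dotProduct_self_le_of_forall_sq_le {v : ι → ℝ} {q : ℝ} (hq : 0 ≤ q)
    (h : ∀ w, (w ⬝ᵥ v) ^ 2 ≤ q * (w ⬝ᵥ w)) : v ⬝ᵥ v ≤ q := by
  rcases (dotProduct_self_nonneg v).eq_or_lt with h0 | hpos
  · exact h0 ▸ hq
  · exact le_of_mul_le_mul_right (by simpa [sq] using h v) hpos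

variable [DecidableEq ι]

lemma mulVec_dotProduct_mulVec_self_le (A : Matrix κ ι ℝ) (v : ι → ℝ) :
    A *ᵥ v ⬝ᵥ A *ᵥ v ≤ ‖A‖ ^ 2 * (v ⬝ᵥ v) := by
  have h := pow_le_pow_left₀ (norm_nonneg _) (l2_opNorm_mulVec A (WithLp.toLp 2 v)) 2
  simpa [mul_pow, EuclideanSpace.real_norm_sq_eq, dotProduct, ← sq] using h

lemma l2_opNorm_le_of_forall_sq_le {A : Matrix κ ι ℝ} {c : ℝ} (hc : 0 ≤ c)
    (h : ∀ u v, (u ⬝ᵥ A *ᵥ v) ^ 2 ≤ c ^ 2 * (u ⬝ᵥ u) * (v ⬝ᵥ v)) : ‖A‖ ≤ c := by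
  rw [l2_opNorm_def]
  refine ContinuousLinearMap.opNorm_le_bound _ hc fun v => ?_
  have hv : A *ᵥ v.ofLp ⬝ᵥ A *ᵥ v.ofLp ≤ c ^ 2 * (v.ofLp ⬝ᵥ v.ofLp) :=
    dotProduct_self_le_of_forall_sq_le
      (mul_nonneg (sq_nonneg c) (dotProduct_self_nonneg _))
      fun w => (h w v.ofLp).trans_eq (by ring)
  refine (sq_le_sq₀ (norm_nonneg _) (by positivity)).1 ?_
  simpa [mul_pow, EuclideanSpace.real_norm_sq_eq, dotProduct, ← sq] using hv

/-- The orthogonal projection onto the coordinates in `S`. -/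
def coordProj (S : Finset ι) : Matrix ι ι ℝ := diagonal fun i => if i ∈ S then 1 else 0

lemma coordProj_mul_coordProj (S T : Finset ι) :
    coordProj S * coordProj T = coordProj (S ∩ T) := by
  simp [coordProj, diagonal_mul_diagonal, ← ite_and, and_comm]

lemma coordProj_univ : coordProj (univ : Finset ι) = 1 := by
  simp [coordProj]

lemma norm_coordProj_le_one (S : Finset ι) : ‖coordProj S‖ ≤ 1 := by
  rw [coordProj, l2_opNorm_diagonal, pi_norm_le_iff_of_nonneg zero_le_one]
  intro i
  split_ifs <;> simp

lemma mul_coordProj_apply {κ : Type*} (B : Matrix κ ι ℝ) (S : Finset ι) (k : κ) (i : ι) :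
    (B * coordProj S) k i = if i ∈ S then B k i else 0 := by
  simp [coordProj]

/-- The part of `M` with row index in `S` and column index outside `S`. -/
def cut (S : Finset ι) (M : Matrix ι ι ℝ) : Matrix ι ι ℝ := coordProj S * M * coordProj Sᶜ

lemma cut_apply (S : Finset ι) (M : Matrix ι ι ℝ) (i j : ι) :
    cut S M i j = if i ∈ S ∧ j ∉ S then M i j else 0 := by
  by_cases hi : i ∈ S <;> by_cases hj : j ∈ S <;> simp [cut, coordProj, hi, hj]

lemma cut_smul (S : Finset ι) (c : ℝ) (M : Matrix ι ι ℝ) : cut S (c • M) = c • cut S M := by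
  simp [cut]

lemma norm_cut_le (S : Finset ι) (M : Matrix ι ι ℝ) : ‖cut S M‖ ≤ ‖M‖ :=
  calc ‖cut S M‖ ≤ ‖coordProj S‖ * ‖M‖ * ‖coordProj Sᶜ‖ :=
        (l2_opNorm_mul _ _).trans (by gcongr; exact l2_opNorm_mul _ _)
    _ ≤ 1 * ‖M‖ * 1 := by gcongr <;> exact norm_coordProj_le_one _
    _ = ‖M‖ := by ring

end LinearAlgebra

section Chaos

open Finset Matrix
open scoped BigOperators Matrix.Norms.L2Operator

variable {ι κ : Type*} [Fintype ι] [Fintype κ] [DecidableEq ι]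

lemma expect_exp_mul_cut_le (S : Finset ι) (M : Matrix ι ι ℝ) (t : ℝ) :
    𝔼 ξ : ι → ℤˣ, exp (t * (signVec ξ ⬝ᵥ cut S M *ᵥ signVec ξ)) ≤
      𝔼 ξ : ι → ℤˣ, exp (t ^ 2 / 2 * (cut S M *ᵥ signVec ξ ⬝ᵥ cut S M *ᵥ signVec ξ)) := by
  have hsplit (ω ω' : ι → ℤˣ) :
      signVec (S.piecewise ω ω') ⬝ᵥ cut S M *ᵥ signVec (S.piecewise ω ω') =
        (cut S M *ᵥ signVec ω') ⬝ᵥ signVec ω := by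
    rw [dotProduct_comm (cut S M *ᵥ _), dotProduct_mulVec_eq_sum, dotProduct_mulVec_eq_sum]
    refine sum_congr rfl fun i _ => sum_congr rfl fun j _ => ?_
    by_cases hi : i ∈ S <;> by_cases hj : j ∈ S <;> simp [cut_apply, signVec, hi, hj]
  calc 𝔼 ξ : ι → ℤˣ, exp (t * (signVec ξ ⬝ᵥ cut S M *ᵥ signVec ξ))
      = 𝔼 ω : ι → ℤˣ, 𝔼 ω' : ι → ℤˣ, exp (t * ((cut S M *ᵥ signVec ω') ⬝ᵥ signVec ω)) := by
        rw [← expect_expect_piecewise S]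
        simp only [hsplit]
    _ = 𝔼 ω' : ι → ℤˣ, 𝔼 ω : ι → ℤˣ, exp ((t • cut S M *ᵥ signVec ω') ⬝ᵥ signVec ω) := by
        simp only [smul_dotProduct, smul_eq_mul]
        exact expect_comm _ _ _
    _ ≤ 𝔼 ω' : ι → ℤˣ, exp ((t • cut S M *ᵥ signVec ω') ⬝ᵥ (t • cut S M *ᵥ signVec ω') / 2) :=
        expect_le_expect fun ω' _ => expect_exp_dotProduct_signVec_le _
    _ = _ := by
        simp only [smul_dotProduct, dotProduct_smul, smul_eq_mul]
        exact expect_congr rfl fun ω' _ => by ring_nf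

lemma expect_mem_and_notMem {i j : ι} (hij : i ≠ j) :
    𝔼 S : Finset ι, (if i ∈ S ∧ j ∉ S then (1 : ℝ) else 0) = 1 / 4 := by
  have hIcc : ({S : Finset ι | i ∈ S ∧ j ∉ S} : Finset (Finset ι)) = Icc {i} {j}ᶜ := by
    ext S; simp [subset_compl_singleton]
  have hcard : Fintype.card ι = Fintype.card ι - 2 + 2 := by
    have := Fintype.one_lt_card_iff.2 ⟨i, j, hij⟩
    omega
  rw [Fintype.expect_eq_sum_div_card, sum_boole, hIcc, card_Icc_finset (by simpa using hij.symm),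
    card_compl, card_singleton, card_singleton, Nat.sub_sub, Fintype.card_finset]
  nth_rw 2 [hcard]
  push_cast
  rw [pow_add]
  field_simp
  norm_num

lemma expect_cut_apply (M : Matrix ι ι ℝ) (i j : ι) :
    𝔼 S, cut S M i j = if i = j then 0 else M i j / 4 := by
  split_ifs with hij
  · simp [cut_apply, hij]
  · calc 𝔼 S, cut S M i j
        = M i j * 𝔼 S : Finset ι, (if i ∈ S ∧ j ∉ S then (1 : ℝ) else 0) := by
          simp [cut_apply, mul_expect]
      _ = M i j / 4 := by rw [expect_mem_and_notMem hij]; ring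

lemma signVec_dotProduct_mulVec_signVec (M : Matrix ι ι ℝ) (ξ : ι → ℤˣ) :
    signVec ξ ⬝ᵥ M *ᵥ signVec ξ =
      M.trace + 𝔼 S : Finset ι, 4 * (signVec ξ ⬝ᵥ cut S M *ᵥ signVec ξ) := by
  have hentry (i j : ι) : M i j * (signVec ξ i * signVec ξ j) =
      (if i = j then M i i else 0) + 4 * ((𝔼 S, cut S M i j) * (signVec ξ i * signVec ξ j)) := by
    rw [expect_cut_apply]
    split_ifs with hij
    · simp [hij, signVec_mul_self]
    · ring
  simp only [dotProduct_mulVec_eq_sum, hentry, sum_add_distrib, expect_mul, mul_expect, trace,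
    expect_sum_comm, mul_sum, sum_ite_eq, mem_univ, if_true, diag_apply]

lemma exists_expect_exp_le_expect_exp_cut (M : Matrix ι ι ℝ) :
    ∃ S : Finset ι, 𝔼 ξ : ι → ℤˣ, exp (signVec ξ ⬝ᵥ M *ᵥ signVec ξ) ≤
      exp M.trace * 𝔼 ξ : ι → ℤˣ, exp (8 * (cut S M *ᵥ signVec ξ ⬝ᵥ cut S M *ᵥ signVec ξ)) := by
  have h : 𝔼 ξ : ι → ℤˣ, exp (signVec ξ ⬝ᵥ M *ᵥ signVec ξ) ≤ 𝔼 S : Finset ι, exp M.trace *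
      𝔼 ξ : ι → ℤˣ, exp (8 * (cut S M *ᵥ signVec ξ ⬝ᵥ cut S M *ᵥ signVec ξ)) :=
    calc 𝔼 ξ : ι → ℤˣ, exp (signVec ξ ⬝ᵥ M *ᵥ signVec ξ)
        ≤ 𝔼 ξ : ι → ℤˣ, exp M.trace *
            𝔼 S : Finset ι, exp (4 * (signVec ξ ⬝ᵥ cut S M *ᵥ signVec ξ)) := by
          refine expect_le_expect fun ξ _ => ?_
          rw [signVec_dotProduct_mulVec_signVec, exp_add]
          gcongr
          exact exp_expect_le_expect_exp _
      _ = 𝔼 S : Finset ι, exp M.trace *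
            𝔼 ξ : ι → ℤˣ, exp (4 * (signVec ξ ⬝ᵥ cut S M *ᵥ signVec ξ)) := by
          rw [← mul_expect, ← mul_expect, expect_comm]
      _ ≤ _ := expect_le_expect fun S _ => by
          refine mul_le_mul_of_nonneg_left ?_ (exp_nonneg _)
          have h8 : (4 : ℝ) ^ 2 / 2 = 8 := by norm_num
          exact h8 ▸ expect_exp_mul_cut_le S M 4
  obtain ⟨S, -, hS⟩ := exists_le_of_le_expect univ_nonempty h
  exact ⟨S, hS⟩

lemma cut_transpose_mul_self_mulVec_dotProduct_self_le (S : Finset ι) (B : Matrix κ ι ℝ)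
    (v : ι → ℝ) : cut S (Bᵀ * B) *ᵥ v ⬝ᵥ cut S (Bᵀ * B) *ᵥ v ≤
      ‖B‖ ^ 2 * ((B * coordProj Sᶜ) *ᵥ v ⬝ᵥ (B * coordProj Sᶜ) *ᵥ v) := by
  classical
  have hfactor : cut S (Bᵀ * B) *ᵥ v = (coordProj S * Bᵀ) *ᵥ ((B * coordProj Sᶜ) *ᵥ v) := by
    simp only [cut, mulVec_mulVec, Matrix.mul_assoc]
  have hnorm : ‖coordProj S * Bᵀ‖ ≤ ‖B‖ :=
    calc ‖coordProj S * Bᵀ‖ ≤ ‖coordProj S‖ * ‖Bᵀ‖ := l2_opNorm_mul _ _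
      _ ≤ 1 * ‖Bᵀ‖ := by gcongr; exact norm_coordProj_le_one S
      _ = ‖B‖ := by rw [one_mul, ← conjTranspose_eq_transpose_of_trivial, l2_opNorm_conjTranspose]
  rw [hfactor]
  refine (mulVec_dotProduct_mulVec_self_le _ _).trans ?_
  gcongr
  exact dotProduct_self_nonneg _

lemma exists_sq_expect_exp_norm_sq_le {B : Matrix κ ι ℝ} {μ : ℝ} (hμ : 0 ≤ μ)
    (hB : 16 * μ * ‖B‖ ^ 2 ≤ 1) :
    ∃ S : Finset ι, (𝔼 ξ : ι → ℤˣ, exp (μ * (B *ᵥ signVec ξ ⬝ᵥ B *ᵥ signVec ξ))) ^ 2 ≤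
      exp (2 * μ * ∑ k, ∑ i, B k i ^ 2) * 𝔼 ξ : ι → ℤˣ,
        exp (μ * ((B * coordProj S) *ᵥ signVec ξ ⬝ᵥ (B * coordProj S) *ᵥ signVec ξ)) := by
  obtain ⟨S, hS⟩ := exists_expect_exp_le_expect_exp_cut (μ • (Bᵀ * B))
  have hquad (ξ : ι → ℤˣ) : signVec ξ ⬝ᵥ (μ • (Bᵀ * B)) *ᵥ signVec ξ =
      μ * (B *ᵥ signVec ξ ⬝ᵥ B *ᵥ signVec ξ) := by
    rw [smul_mulVec, dotProduct_smul, smul_eq_mul, dotProduct_transpose_mul_self_mulVec]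
  let Q (ξ : ι → ℤˣ) : ℝ :=
    μ * ((B * coordProj Sᶜ) *ᵥ signVec ξ ⬝ᵥ (B * coordProj Sᶜ) *ᵥ signVec ξ)
  have hcut (ξ : ι → ℤˣ) : 8 * (cut S (μ • (Bᵀ * B)) *ᵥ signVec ξ ⬝ᵥ
      cut S (μ • (Bᵀ * B)) *ᵥ signVec ξ) ≤ Q ξ / 2 := by
    simp only [cut_smul, smul_mulVec, dotProduct_smul, smul_dotProduct, smul_eq_mul]
    have h := cut_transpose_mul_self_mulVec_dotProduct_self_le S B (signVec ξ)
    have hQ : 0 ≤ Q ξ := mul_nonneg hμ (dotProduct_self_nonneg _)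
    calc _ ≤ 8 * (μ * (μ * (‖B‖ ^ 2 * ((B * coordProj Sᶜ) *ᵥ signVec ξ ⬝ᵥ
          (B * coordProj Sᶜ) *ᵥ signVec ξ)))) := by gcongr
      _ = 16 * μ * ‖B‖ ^ 2 * (Q ξ / 2) := by ring
      _ ≤ 1 * (Q ξ / 2) := by gcongr
      _ = Q ξ / 2 := one_mul _
  refine ⟨Sᶜ, ?_⟩
  calc (𝔼 ξ : ι → ℤˣ, exp (μ * (B *ᵥ signVec ξ ⬝ᵥ B *ᵥ signVec ξ))) ^ 2
      ≤ (exp (μ * ∑ k, ∑ i, B k i ^ 2) * 𝔼 ξ, exp (Q ξ / 2)) ^ 2 := by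
        simp only [hquad, trace_smul, trace_transpose_mul_self, smul_eq_mul] at hS
        refine pow_le_pow_left₀ (expect_nonneg fun _ _ => exp_nonneg _) (hS.trans ?_) 2
        gcongr with ξ
        exact hcut ξ
    _ ≤ exp (2 * μ * ∑ k, ∑ i, B k i ^ 2) * 𝔼 ξ, exp (Q ξ) := by
        rw [mul_pow, ← exp_nat_mul, Nat.cast_two, ← mul_assoc]
        gcongr
        exact sq_expect_exp_half_le_expect_exp Q

-- The previous bound controls the mgf `Z T` of `B * coordProj T` by `Z T ^ 2 ≤ K * Z (T ∩ S)`;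
-- at a maximizing `T` this closes up to `Z T ≤ K`.
lemma expect_exp_norm_sq_le {B : Matrix κ ι ℝ} {μ : ℝ} (hμ : 0 ≤ μ)
    (hB : 16 * μ * ‖B‖ ^ 2 ≤ 1) :
    𝔼 ξ : ι → ℤˣ, exp (μ * (B *ᵥ signVec ξ ⬝ᵥ B *ᵥ signVec ξ)) ≤
      exp (2 * μ * ∑ k, ∑ i, B k i ^ 2) := by
  let Z (T : Finset ι) : ℝ := 𝔼 ξ : ι → ℤˣ,
    exp (μ * ((B * coordProj T) *ᵥ signVec ξ ⬝ᵥ (B * coordProj T) *ᵥ signVec ξ))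
  obtain ⟨T, hT⟩ := Finite.exists_max Z
  have hZpos : 0 < Z T := expect_pos (fun _ _ => exp_pos _) univ_nonempty
  have hnorm : ‖B * coordProj T‖ ≤ ‖B‖ :=
    calc ‖B * coordProj T‖ ≤ ‖B‖ * ‖coordProj T‖ := l2_opNorm_mul _ _
      _ ≤ ‖B‖ * 1 := by gcongr; exact norm_coordProj_le_one T
      _ = ‖B‖ := mul_one _
  have hfrob : ∑ k, ∑ i, (B * coordProj T) k i ^ 2 ≤ ∑ k, ∑ i, B k i ^ 2 := by
    refine sum_le_sum fun k _ => sum_le_sum fun i _ => ?_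
    rw [mul_coordProj_apply]
    split_ifs
    · exact le_rfl
    · simpa using sq_nonneg (B k i)
  obtain ⟨S, hS⟩ := exists_sq_expect_exp_norm_sq_le (B := B * coordProj T) hμ (by grw [hnorm, hB])
  have hclosed : Z T * Z T ≤ exp (2 * μ * ∑ k, ∑ i, B k i ^ 2) * Z T := by
    rw [Matrix.mul_assoc, coordProj_mul_coordProj] at hS
    calc Z T * Z T = Z T ^ 2 := (sq _).symm
      _ ≤ exp (2 * μ * ∑ k, ∑ i, (B * coordProj T) k i ^ 2) * Z (T ∩ S) := hS
      _ ≤ exp (2 * μ * ∑ k, ∑ i, B k i ^ 2) * Z T := by gcongr; exact hT _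
  calc 𝔼 ξ : ι → ℤˣ, exp (μ * (B *ᵥ signVec ξ ⬝ᵥ B *ᵥ signVec ξ))
      = Z univ := by simp [Z, coordProj_univ]
    _ ≤ Z T := hT univ
    _ ≤ _ := le_of_mul_le_mul_right hclosed hZpos

lemma expect_exp_chaos_le {M : Matrix ι ι ℝ} (hM : 128 * ‖M‖ ^ 2 ≤ 1) :
    𝔼 ξ : ι → ℤˣ, exp (signVec ξ ⬝ᵥ M *ᵥ signVec ξ) ≤
      exp (M.trace + 16 * ∑ i, ∑ j, M i j ^ 2) := by
  obtain ⟨S, hS⟩ := exists_expect_exp_le_expect_exp_cut M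
  have hfrob : ∑ i, ∑ j, cut S M i j ^ 2 ≤ ∑ i, ∑ j, M i j ^ 2 := by
    refine sum_le_sum fun i _ => sum_le_sum fun j _ => ?_
    rw [cut_apply]
    split_ifs
    · exact le_rfl
    · simpa using sq_nonneg (M i j)
  have hcut := expect_exp_norm_sq_le (B := cut S M) (μ := 8) (by norm_num)
    (by grw [norm_cut_le]; linarith)
  refine hS.trans ?_
  rw [exp_add]
  gcongr
  refine hcut.trans (exp_le_exp.2 ?_)
  linarith

end Chaos

section RIP

open Finset Matrix

variable {ι κ : Type*} [Fintype ι] [Fintype κ]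

/-- The restricted isometry property of order `k` and level `δ`, in the homogeneous form which
does not normalize the `k`-sparse vectors. -/
def HasRIP (A : Matrix κ ι ℝ) (k : ℕ) (δ : ℝ) : Prop :=
  ∀ u : ι → ℝ, #{i | u i ≠ 0} ≤ k → |A *ᵥ u ⬝ᵥ A *ᵥ u - u ⬝ᵥ u| ≤ δ * (u ⬝ᵥ u)

lemma card_add_smul_ne_zero_le (u w : ι → ℝ) (t : ℝ) :
    #{i | (u + t • w) i ≠ 0} ≤ #{i | u i ≠ 0} + #{i | w i ≠ 0} := by
  classical
  refine (card_le_card fun i hi => ?_).trans (card_union_le _ _)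
  simp only [mem_union, mem_filter_univ] at hi ⊢
  by_contra! h
  exact hi (by simp [h])

variable {A : Matrix κ ι ℝ} {k : ℕ} {δ : ℝ}

lemma HasRIP.sq_dotProduct_le (hA : HasRIP A k δ) {u w : ι → ℝ} (huw : u ⬝ᵥ w = 0)
    (hcard : #{i | u i ≠ 0} + #{i | w i ≠ 0} ≤ k) :
    (A *ᵥ u ⬝ᵥ A *ᵥ w) ^ 2 ≤ δ ^ 2 * (u ⬝ᵥ u) * (w ⬝ᵥ w) := by
  have hpolar (t : ℝ) :
      0 ≤ δ * (w ⬝ᵥ w) * (t * t) + -2 * (A *ᵥ u ⬝ᵥ A *ᵥ w) * t + δ * (u ⬝ᵥ u) := by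
    have hplus := (abs_le.1 (hA (u + t • w) ((card_add_smul_ne_zero_le u w t).trans hcard))).2
    have hminus :=
      (abs_le.1 (hA (u + (-t) • w) ((card_add_smul_ne_zero_le u w (-t)).trans hcard))).1
    simp only [mulVec_add, mulVec_smul, add_dotProduct, dotProduct_add, smul_dotProduct,
      dotProduct_smul, smul_eq_mul, dotProduct_comm w u, huw,
      dotProduct_comm (A *ᵥ w) (A *ᵥ u)] at hplus hminus
    linarith
  have hdiscrim := discrim_le_zero hpolar
  rw [discrim] at hdiscrim
  linarith

variable [DecidableEq ι]

/-- The Gram matrix of the columns of `A` scaled by the entries of `x`; its quadratic form at a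
sign vector `ξ` is the squared norm of `A D_ξ x`. -/
def scaledGram (A : Matrix κ ι ℝ) (x : ι → ℝ) : Matrix ι ι ℝ :=
  (A * diagonal x)ᵀ * (A * diagonal x)

lemma scaledGram_transpose (A : Matrix κ ι ℝ) (x : ι → ℝ) :
    (scaledGram A x)ᵀ = scaledGram A x := by
  simp [scaledGram]

lemma sum_scaledGram_mul (A : Matrix κ ι ℝ) (x u w : ι → ℝ) (S T : Finset ι) :
    ∑ i ∈ S, ∑ j ∈ T, scaledGram A x i j * (u i * w j) =
      A *ᵥ (fun i => if i ∈ S then x i * u i else 0) ⬝ᵥ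
        A *ᵥ (fun j => if j ∈ T then x j * w j else 0) := by
  have hscale (S : Finset ι) (u : ι → ℝ) : (fun i => if i ∈ S then x i * u i else 0) =
      diagonal x *ᵥ fun i => if i ∈ S then u i else 0 := by
    ext i; simp [mulVec_diagonal]
  rw [hscale, hscale, mulVec_mulVec, mulVec_mulVec, ← dotProduct_transpose_mul_self_mulVec,
    dotProduct_mulVec_eq_sum]
  simp [scaledGram]

lemma HasRIP.sq_sum_scaledGram_le (hA : HasRIP A k δ) {S T : Finset ι} (hST : Disjoint S T)
    (hcard : #S + #T ≤ k) (x u w : ι → ℝ) :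
    (∑ i ∈ S, ∑ j ∈ T, scaledGram A x i j * (u i * w j)) ^ 2 ≤
      δ ^ 2 * (∑ i ∈ S, x i ^ 2 * u i ^ 2) * ∑ j ∈ T, x j ^ 2 * w j ^ 2 := by
  have h := hA.sq_dotProduct_le (u := fun i => if i ∈ S then x i * u i else 0)
    (w := fun j => if j ∈ T then x j * w j else 0) ?_ ?_
  · rw [sum_scaledGram_mul]
    simpa [dotProduct, mul_pow, ← sq] using h
  · refine sum_eq_zero fun i _ => ?_
    by_cases hi : i ∈ S
    · simp [disjoint_left.1 hST hi]
    · simp [hi]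
  · refine (add_le_add (card_le_card fun i hi => ?_) (card_le_card fun i hi => ?_)).trans hcard
    · by_contra h; simp [h] at hi
    · by_contra h; simp [h] at hi

lemma HasRIP.abs_sum_scaledGram_signVec_sub_le (hA : HasRIP A k δ) {S : Finset ι} (hcard : #S ≤ k)
    (x : ι → ℝ) (ξ : ι → ℤˣ) :
    |∑ i ∈ S, ∑ j ∈ S, scaledGram A x i j * (signVec ξ i * signVec ξ j) - ∑ i ∈ S, x i ^ 2| ≤
      δ * ∑ i ∈ S, x i ^ 2 := by
  have h := hA (fun i => if i ∈ S then x i * signVec ξ i else 0)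
    ((card_le_card fun i hi => by by_contra h; simp [h] at hi).trans hcard)
  rw [sum_scaledGram_mul]
  have hself : (fun i => if i ∈ S then x i * signVec ξ i else 0) ⬝ᵥ
      (fun i => if i ∈ S then x i * signVec ξ i else 0) = ∑ i ∈ S, x i ^ 2 := by
    simp [dotProduct, mul_mul_mul_comm _ (signVec ξ _), signVec_mul_self, sq]
  rwa [hself] at h

end RIP

section Blocking

open Finset

variable {ι : Type*} [Fintype ι]

/-- `b` cuts the coordinates into blocks of at most `s` elements following a decreasing
rearrangement of `|x|`. Sortedness is encoded by its only consequence that matters: every squared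
entry outside the first block is at most the average of the squared entries of the preceding one,
a full block of size `s`. -/
structure IsSortedBlocking (x : ι → ℝ) (s : ℕ) (b : ι → ℕ) : Prop where
  card_le (L : ℕ) : #{i | b i = L} ≤ s
  sq_le (i : ι) : b i ≠ 0 → s * x i ^ 2 ≤ ∑ j with b j + 1 = b i, x j ^ 2

lemma exists_equiv_fin_antitone (f : ι → ℝ) :
    ∃ r : ι ≃ Fin (Fintype.card ι), ∀ i j, r i ≤ r j → f j ≤ f i := by
  let e := Fintype.equivFin ι
  let σ := Tuple.sort fun t => -f (e.symm t)
  refine ⟨e.trans σ.symm, fun i j hij => ?_⟩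
  simpa [σ] using Tuple.monotone_sort (fun t => -f (e.symm t)) hij

lemma exists_isSortedBlocking (x : ι → ℝ) {s : ℕ} (hs : 0 < s) :
    ∃ b, IsSortedBlocking x s b := by
  obtain ⟨r, hr⟩ := exists_equiv_fin_antitone fun i => x i ^ 2
  refine ⟨fun i => r i / s, fun L => ?_, fun i hi => ?_⟩
  · calc #{i | (r i : ℕ) / s = L} ≤ #(Ico (L * s) (L * s + s)) := by
          refine card_le_card_of_injOn (fun i => (r i : ℕ)) (fun i hi => ?_)
            fun i _ j _ hij => r.injective (Fin.ext hij)
          obtain rfl : (r i : ℕ) / s = L := by simpa using hi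
          simp only [coe_Ico, Set.mem_Ico]
          exact ⟨Nat.div_mul_le_self _ _, Nat.lt_div_mul_add hs⟩
      _ = s := by simp
  · obtain ⟨q, hq⟩ := Nat.exists_eq_succ_of_ne_zero hi
    have hfull : s ≤ #{j | (r j : ℕ) / s + 1 = (r i : ℕ) / s} := by
      calc s = #(Ico (q * s) (q * s + s)) := by simp
        _ ≤ _ := by
          refine card_le_card_of_surjOn (fun j => (r j : ℕ)) fun t ht => ?_
          obtain ⟨hqt, htq⟩ : q * s ≤ t ∧ t < q * s + s := by simpa using ht
          have hti : t < (r i : ℕ) := by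
            have := (Nat.le_div_iff_mul_le hs).1 hq.ge
            lia
          refine ⟨r.symm ⟨t, hti.trans (r i).2⟩, ?_, by simp⟩
          simpa [hq] using Nat.div_eq_of_lt_le hqt (by lia)
    have hle (j) (hj : j ∈ ({j | (r j : ℕ) / s + 1 = (r i : ℕ) / s} : Finset ι)) :
        x i ^ 2 ≤ x j ^ 2 := by
      refine hr j i (le_of_not_gt fun hij => ?_)
      have := Nat.div_le_div_right (c := s) (Fin.lt_def.1 hij).le
      simp only [mem_filter_univ] at hj
      lia
    calc (s : ℝ) * x i ^ 2 ≤ #{j | (r j : ℕ) / s + 1 = (r i : ℕ) / s} * x i ^ 2 := by gcongr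
      _ ≤ ∑ j with (r j : ℕ) / s + 1 = (r i : ℕ) / s, x j ^ 2 := by
        rw [← nsmul_eq_mul]
        exact card_nsmul_le_sum _ _ _ hle

end Blocking

section Blocks

open Finset Matrix
open scoped Matrix.Norms.L2Operator

variable {ι κ : Type*} [Fintype ι] [Fintype κ]

/-- The mean of the squared entries of `x` over the block preceding block `L`, that block being
counted as having full size `s`. -/
def prevBlockMean (x : ι → ℝ) (s : ℕ) (b : ι → ℕ) (L : ℕ) : ℝ :=
  (∑ j with b j + 1 = L, x j ^ 2) / s

variable {x : ι → ℝ} {s : ℕ} {b : ι → ℕ}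

lemma prevBlockMean_nonneg (L : ℕ) : 0 ≤ prevBlockMean x s b L :=
  div_nonneg (sum_nonneg fun _ _ => sq_nonneg _) s.cast_nonneg

lemma sum_prevBlockMean_le (T : Finset ℕ) :
    ∑ L ∈ T, prevBlockMean x s b L ≤ (x ⬝ᵥ x) / s := by
  simp only [prevBlockMean, ← sum_div, dotProduct, ← sq]
  gcongr
  exact sum_fiberwise_le_sum_of_sum_fiber_nonneg fun _ _ => sum_nonneg fun _ _ => sq_nonneg _

lemma IsSortedBlocking.sq_le_prevBlockMean (hb : IsSortedBlocking x s b) (hs : 0 < s) {i : ι}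
    (hi : b i ≠ 0) : x i ^ 2 ≤ prevBlockMean x s b (b i) := by
  rw [prevBlockMean, le_div_iff₀' (by exact_mod_cast hs)]
  exact hb.sq_le i hi

lemma IsSortedBlocking.sum_sq_mul_sq_le (hb : IsSortedBlocking x s b) (hs : 0 < s) {L : ℕ}
    (hL : L ≠ 0) (u : ι → ℝ) :
    ∑ i with b i = L, x i ^ 2 * u i ^ 2 ≤ prevBlockMean x s b L * ∑ i with b i = L, u i ^ 2 := by
  rw [mul_sum]
  refine sum_le_sum fun i hi => ?_
  obtain rfl := (mem_filter_univ i).1 hi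
  gcongr
  exact hb.sq_le_prevBlockMean hs hL

lemma sum_filter_block_sq_le (T : Finset ℕ) (u : ι → ℝ) :
    ∑ L ∈ T, ∑ i with b i = L, u i ^ 2 ≤ u ⬝ᵥ u := by
  simp only [dotProduct, ← sq]
  exact sum_fiberwise_le_sum_of_sum_fiber_nonneg fun _ _ => sum_nonneg fun _ _ => sq_nonneg _

lemma sum_offDiag_mul_le (T : Finset ℕ) {f g : ℕ → ℝ} (hf : ∀ L, 0 ≤ f L) (hg : ∀ L, 0 ≤ g L) :
    ∑ p ∈ T.offDiag, f p.1 * g p.2 ≤ (∑ L ∈ T, f L) * ∑ L ∈ T, g L := by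
  rw [sum_mul_sum, ← sum_product']
  exact sum_le_sum_of_subset_of_nonneg
    (fun _ hp => mem_product.2 ⟨(mem_offDiag.1 hp).1, (mem_offDiag.1 hp).2.1⟩)
    fun _ _ _ => mul_nonneg (hf _) (hg _)

/-- The entries of `M` joining two different blocks, neither of which is the first one. -/
def tailBlocks (b : ι → ℕ) (M : Matrix ι ι ℝ) : Matrix ι ι ℝ :=
  of fun i j => if b i ≠ b j ∧ b i ≠ 0 ∧ b j ≠ 0 then M i j else 0

lemma dotProduct_mulVec_eq_add_tailBlocks [DecidableEq ι] (b : ι → ℕ) {M : Matrix ι ι ℝ}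
    (hM : Mᵀ = M) (v : ι → ℝ) :
    v ⬝ᵥ M *ᵥ v = ∑ i, ∑ j with b j = b i, M i j * (v i * v j) +
      2 * (v ⬝ᵥ cut {i | b i ≠ 0} M *ᵥ v) + v ⬝ᵥ tailBlocks b M *ᵥ v := by
  have hentry (i j : ι) : M i j * (v i * v j) =
      (if b j = b i then M i j * (v i * v j) else 0) + cut {i | b i ≠ 0} M i j * (v i * v j) +
        cut {i | b i ≠ 0} M j i * (v j * v i) + tailBlocks b M i j * (v i * v j) := by
    have hsymm : M j i = M i j := congr_fun (congr_fun hM i) j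
    simp only [cut_apply, tailBlocks, of_apply, mem_filter_univ, hsymm, mul_comm (v j)]
    grind
  simp only [dotProduct_mulVec_eq_sum, sum_filter]
  calc ∑ i, ∑ j, M i j * (v i * v j) = _ :=
        sum_congr rfl fun i _ => sum_congr rfl fun j _ => hentry i j
    _ = _ := by
      simp only [sum_add_distrib]
      rw [sum_comm (f := fun i j => cut {i | b i ≠ 0} M j i * (v j * v i))]
      ring

lemma dotProduct_tailBlocks_mulVec (M : Matrix ι ι ℝ) (u w : ι → ℝ) :
    u ⬝ᵥ tailBlocks b M *ᵥ w = ∑ p ∈ ((univ.image b).erase 0).offDiag,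
      ∑ i with b i = p.1, ∑ j with b j = p.2, M i j * (u i * w j) := by
  calc u ⬝ᵥ tailBlocks b M *ᵥ w
      = ∑ q : ι × ι with b q.1 ≠ b q.2 ∧ b q.1 ≠ 0 ∧ b q.2 ≠ 0,
          M q.1 q.2 * (u q.1 * w q.2) := by
        simp [dotProduct_mulVec_eq_sum, tailBlocks, sum_filter, Fintype.sum_prod_type]
    _ = ∑ p ∈ ((univ.image b).erase 0).offDiag,
          ∑ q : ι × ι with (b q.1 ≠ b q.2 ∧ b q.1 ≠ 0 ∧ b q.2 ≠ 0) ∧ (b q.1, b q.2) = p,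
            M q.1 q.2 * (u q.1 * w q.2) := by
        simp only [← filter_filter]
        refine (sum_fiberwise_of_maps_to (fun q hq => ?_) _).symm
        simpa [and_comm, and_assoc, and_left_comm] using hq
    _ = _ := by
        refine sum_congr rfl fun p hp => ?_
        rw [← sum_product']
        refine sum_congr ?_ fun _ _ => rfl
        ext q
        simp only [mem_offDiag, mem_erase] at hp
        simp only [mem_filter_univ, mem_product, Prod.ext_iff]
        grind

variable [DecidableEq ι] {A : Matrix κ ι ℝ} {k : ℕ} {δ : ℝ}

lemma HasRIP.abs_sum_sameBlock_sub_le (hA : HasRIP A k δ) (hb : ∀ L, #{i | b i = L} ≤ k)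
    (x : ι → ℝ) (ξ : ι → ℤˣ) :
    |∑ i, ∑ j with b j = b i, scaledGram A x i j * (signVec ξ i * signVec ξ j) - x ⬝ᵥ x| ≤
      δ * (x ⬝ᵥ x) := by
  have hfiber (f : ι → ℝ) : ∑ i, f i = ∑ L ∈ univ.image b, ∑ i with b i = L, f i :=
    (sum_fiberwise_of_maps_to (fun i _ => mem_image_of_mem b (mem_univ i)) f).symm
  have hx : x ⬝ᵥ x = ∑ L ∈ univ.image b, ∑ i with b i = L, x i ^ 2 := by
    simp only [dotProduct, ← sq, hfiber]
  have hsame : ∑ i, ∑ j with b j = b i, scaledGram A x i j * (signVec ξ i * signVec ξ j) =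
      ∑ L ∈ univ.image b, ∑ i with b i = L, ∑ j with b j = L,
        scaledGram A x i j * (signVec ξ i * signVec ξ j) := by
    rw [hfiber]
    refine sum_congr rfl fun L _ => sum_congr rfl fun i hi => ?_
    rw [(mem_filter_univ i).1 hi]
  rw [hsame, hx, ← sum_sub_distrib, mul_sum]
  exact (abs_sum_le_sum_abs _ _).trans <| sum_le_sum fun L _ =>
    hA.abs_sum_scaledGram_signVec_sub_le (hb L) x ξ

lemma HasRIP.sq_sum_blocks_le (hA : HasRIP A k δ) (hb : IsSortedBlocking x s b) (hs : 0 < s)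
    (hk : 2 * s ≤ k) {L L' : ℕ} (hL : L ≠ 0) (hne : L ≠ L') (u w : ι → ℝ) :
    (∑ i with b i = L, ∑ j with b j = L', scaledGram A x i j * (u i * w j)) ^ 2 ≤
      δ ^ 2 * (prevBlockMean x s b L * ∑ i with b i = L, u i ^ 2) *
        ∑ j with b j = L', x j ^ 2 * w j ^ 2 := by
  have hdisj : Disjoint ({i | b i = L} : Finset ι) ({j | b j = L'} : Finset ι) :=
    disjoint_filter.2 fun i _ h h' => hne (h.symm.trans h')
  refine (hA.sq_sum_scaledGram_le hdisj (by linarith [hb.card_le L, hb.card_le L']) x u w).trans ?_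
  gcongr
  exact hb.sum_sq_mul_sq_le hs hL u

lemma HasRIP.sq_sum_tail_blocks_le (hA : HasRIP A k δ) (hb : IsSortedBlocking x s b)
    (hs : 0 < s) (hk : 2 * s ≤ k) {L L' : ℕ} (hL : L ≠ 0) (hL' : L' ≠ 0) (hne : L ≠ L')
    (u w : ι → ℝ) :
    (∑ i with b i = L, ∑ j with b j = L', scaledGram A x i j * (u i * w j)) ^ 2 ≤
      δ ^ 2 * (prevBlockMean x s b L * prevBlockMean x s b L') *
        ((∑ i with b i = L, u i ^ 2) * ∑ j with b j = L', w j ^ 2) := by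
  calc _ ≤ δ ^ 2 * (prevBlockMean x s b L * ∑ i with b i = L, u i ^ 2) *
          ∑ j with b j = L', x j ^ 2 * w j ^ 2 := hA.sq_sum_blocks_le hb hs hk hL hne u w
    _ ≤ δ ^ 2 * (prevBlockMean x s b L * ∑ i with b i = L, u i ^ 2) *
          (prevBlockMean x s b L' * ∑ j with b j = L', w j ^ 2) :=
      mul_le_mul_of_nonneg_left (hb.sum_sq_mul_sq_le hs hL' w) <| mul_nonneg (sq_nonneg δ) <|
        mul_nonneg (prevBlockMean_nonneg L) <| sum_nonneg fun _ _ => sq_nonneg _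
    _ = _ := by ring

lemma HasRIP.norm_tailBlocks_le (hA : HasRIP A k δ) (hδ : 0 ≤ δ) (hb : IsSortedBlocking x s b)
    (hs : 0 < s) (hk : 2 * s ≤ k) :
    ‖tailBlocks b (scaledGram A x)‖ ≤ δ * (x ⬝ᵥ x) / s := by
  have hx := dotProduct_self_nonneg x
  refine l2_opNorm_le_of_forall_sq_le (by positivity) fun u w => ?_
  set T := (univ.image b).erase 0
  set a := prevBlockMean x s b
  let U (L : ℕ) : ℝ := ∑ i with b i = L, u i ^ 2
  let W (L : ℕ) : ℝ := ∑ i with b i = L, w i ^ 2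
  have ha (L : ℕ) : 0 ≤ a L := prevBlockMean_nonneg L
  have hU (L : ℕ) : 0 ≤ U L := sum_nonneg fun _ _ => sq_nonneg _
  have hW (L : ℕ) : 0 ≤ W L := sum_nonneg fun _ _ => sq_nonneg _
  have hsum_a : 0 ≤ ∑ L ∈ T, a L := sum_nonneg fun L _ => ha L
  have : 0 ≤ ∑ L ∈ T, W L := sum_nonneg fun L _ => hW L
  calc (u ⬝ᵥ tailBlocks b (scaledGram A x) *ᵥ w) ^ 2
      ≤ (∑ p ∈ T.offDiag, δ ^ 2 * (a p.1 * a p.2)) * ∑ p ∈ T.offDiag, U p.1 * W p.2 := by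
        rw [dotProduct_tailBlocks_mulVec]
        refine sum_sq_le_sum_mul_sum_of_sq_le_mul _
          (fun p _ => mul_nonneg (sq_nonneg δ) (mul_nonneg (ha _) (ha _)))
          (fun p _ => mul_nonneg (hU _) (hW _)) fun p hp => ?_
        obtain ⟨h₁, h₂, hne⟩ := mem_offDiag.1 hp
        exact hA.sq_sum_tail_blocks_le hb hs hk (ne_of_mem_erase h₁) (ne_of_mem_erase h₂) hne u w
    _ ≤ (δ ^ 2 * ((∑ L ∈ T, a L) * ∑ L ∈ T, a L)) * ((∑ L ∈ T, U L) * ∑ L ∈ T, W L) := by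
        rw [← mul_sum]
        refine mul_le_mul (mul_le_mul_of_nonneg_left (sum_offDiag_mul_le T ha ha) (sq_nonneg δ))
          (sum_offDiag_mul_le T hU hW) (sum_nonneg fun p _ => mul_nonneg (hU _) (hW _)) ?_
        positivity
    _ = (δ * ∑ L ∈ T, a L) ^ 2 * (∑ L ∈ T, U L) * ∑ L ∈ T, W L := by ring
    _ ≤ (δ * ((x ⬝ᵥ x) / s)) ^ 2 * (u ⬝ᵥ u) * (w ⬝ᵥ w) := by
        have hu := dotProduct_self_nonneg u
        gcongr
        · exact sum_prevBlockMean_le T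
        · exact sum_filter_block_sq_le T u
        · exact sum_filter_block_sq_le T w
    _ = _ := by rw [mul_div_assoc]

lemma HasRIP.sum_sq_scaledGram_le (hA : HasRIP A k δ) {S : Finset ι} {i : ι} (hi : i ∉ S)
    (hcard : #S + 1 ≤ k) (x : ι → ℝ) {a : ℝ} (ha : 0 ≤ a) (hx : ∀ j ∈ S, x j ^ 2 ≤ a) :
    ∑ j ∈ S, scaledGram A x i j ^ 2 ≤ δ ^ 2 * x i ^ 2 * a := by
  have hrow (w : ι → ℝ) :
      (∑ j ∈ S, scaledGram A x i j * w j) ^ 2 ≤ δ ^ 2 * x i ^ 2 * a * (w ⬝ᵥ w) := by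
    have h := hA.sq_sum_scaledGram_le (S := {i}) (T := S) (disjoint_singleton_left.2 hi)
      (by simpa [add_comm] using hcard) x 1 w
    simp only [sum_singleton, Pi.one_apply, one_mul, one_pow, mul_one] at h
    refine h.trans ?_
    rw [mul_assoc (_ * _) a]
    gcongr
    calc ∑ j ∈ S, x j ^ 2 * w j ^ 2 ≤ ∑ j ∈ S, a * w j ^ 2 :=
          sum_le_sum fun j hj => mul_le_mul_of_nonneg_right (hx j hj) (sq_nonneg _)
      _ ≤ ∑ j, a * w j ^ 2 := sum_le_univ_sum_of_nonneg fun j => by positivity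
      _ = a * (w ⬝ᵥ w) := by simp [dotProduct, mul_sum, sq]
  simpa [dotProduct, ← sq] using dotProduct_self_le_of_forall_sq_le
    (v := fun j => if j ∈ S then scaledGram A x i j else 0) (q := δ ^ 2 * x i ^ 2 * a)
    (by positivity) fun w => by simpa [dotProduct, mul_comm] using hrow w

lemma HasRIP.sum_sq_tailBlocks_row_le (hA : HasRIP A k δ) (hb : IsSortedBlocking x s b)
    (hs : 0 < s) (hk : 2 * s ≤ k) (i : ι) :
    ∑ j, tailBlocks b (scaledGram A x) i j ^ 2 ≤ δ ^ 2 * x i ^ 2 * ((x ⬝ᵥ x) / s) := by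
  have hblock (L : ℕ) : ∑ j with b j = L, tailBlocks b (scaledGram A x) i j ^ 2 ≤
      δ ^ 2 * x i ^ 2 * prevBlockMean x s b L := by
    have hL_nonneg := prevBlockMean_nonneg (x := x) (s := s) (b := b) L
    by_cases hL : b i ≠ L ∧ b i ≠ 0 ∧ L ≠ 0
    · calc ∑ j with b j = L, tailBlocks b (scaledGram A x) i j ^ 2
          = ∑ j with b j = L, scaledGram A x i j ^ 2 := by
            refine sum_congr rfl fun j hj => ?_
            rw [tailBlocks, of_apply, (mem_filter_univ j).1 hj, if_pos hL]
        _ ≤ _ := by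
            refine hA.sum_sq_scaledGram_le (by simpa using hL.1) (by linarith [hb.card_le L]) x
              hL_nonneg fun j hj => ?_
            obtain rfl := (mem_filter_univ j).1 hj
            exact hb.sq_le_prevBlockMean hs hL.2.2
    · rw [sum_eq_zero fun j hj => ?_]
      · positivity
      · rw [tailBlocks, of_apply, (mem_filter_univ j).1 hj, if_neg hL, sq, zero_mul]
  calc ∑ j, tailBlocks b (scaledGram A x) i j ^ 2
      = ∑ L ∈ univ.image b, ∑ j with b j = L, tailBlocks b (scaledGram A x) i j ^ 2 :=
        (sum_fiberwise_of_maps_to (fun j _ => mem_image_of_mem b (mem_univ j)) _).symm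
    _ ≤ ∑ L ∈ univ.image b, δ ^ 2 * x i ^ 2 * prevBlockMean x s b L :=
        sum_le_sum fun L _ => hblock L
    _ ≤ _ := by
        rw [← mul_sum]
        exact mul_le_mul_of_nonneg_left (sum_prevBlockMean_le _) (by positivity)

lemma HasRIP.sum_sq_tailBlocks_le (hA : HasRIP A k δ) (hb : IsSortedBlocking x s b)
    (hs : 0 < s) (hk : 2 * s ≤ k) :
    ∑ i, ∑ j, tailBlocks b (scaledGram A x) i j ^ 2 ≤ δ ^ 2 * (x ⬝ᵥ x) ^ 2 / s := by
  calc ∑ i, ∑ j, tailBlocks b (scaledGram A x) i j ^ 2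
      ≤ ∑ i, δ ^ 2 * x i ^ 2 * ((x ⬝ᵥ x) / s) :=
        sum_le_sum fun i _ => hA.sum_sq_tailBlocks_row_le hb hs hk i
    _ = δ ^ 2 * (x ⬝ᵥ x) * ((x ⬝ᵥ x) / s) := by
        rw [← sum_mul, ← mul_sum]
        simp only [dotProduct, sq]
    _ = _ := by ring

lemma dotProduct_cut_mulVec_firstBlock (M : Matrix ι ι ℝ) (u w : ι → ℝ) :
    u ⬝ᵥ cut {i | b i ≠ 0} M *ᵥ w = ∑ L ∈ (univ.image b).erase 0,
      ∑ i with b i = L, ∑ j with b j = 0, M i j * (u i * w j) := by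
  calc u ⬝ᵥ cut {i | b i ≠ 0} M *ᵥ w
      = ∑ i with b i ≠ 0, ∑ j with b j = 0, M i j * (u i * w j) := by
        simp only [dotProduct_mulVec_eq_sum, cut_apply, sum_filter]
        refine sum_congr rfl fun i _ => ?_
        by_cases hi : b i = 0 <;> simp [hi]
    _ = ∑ L ∈ (univ.image b).erase 0, ∑ i with b i ≠ 0 ∧ b i = L, ∑ j with b j = 0,
          M i j * (u i * w j) := by
        simp only [← filter_filter]
        exact (sum_fiberwise_of_maps_to (fun i hi => by simpa using hi) _).symm
    _ = _ := by
        refine sum_congr rfl fun L hL => sum_congr ?_ fun _ _ => rfl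
        refine filter_congr fun i _ => and_iff_right_of_imp ?_
        rintro rfl
        exact ne_of_mem_erase hL

lemma HasRIP.cut_firstBlock_mulVec_dotProduct_self_le (hA : HasRIP A k δ)
    (hb : IsSortedBlocking x s b) (hs : 0 < s) (hk : 2 * s ≤ k) (ξ : ι → ℤˣ) :
    cut {i | b i ≠ 0} (scaledGram A x) *ᵥ signVec ξ ⬝ᵥ
      cut {i | b i ≠ 0} (scaledGram A x) *ᵥ signVec ξ ≤ δ ^ 2 * (x ⬝ᵥ x) ^ 2 / s := by
  have hx := dotProduct_self_nonneg x
  refine dotProduct_self_le_of_forall_sq_le (by positivity) fun w => ?_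
  set T := (univ.image b).erase 0
  set a := prevBlockMean x s b
  have ha (L : ℕ) : 0 ≤ a L := prevBlockMean_nonneg L
  let W (L : ℕ) : ℝ := ∑ i with b i = L, w i ^ 2
  have hfirst : ∑ j with b j = 0, x j ^ 2 * signVec ξ j ^ 2 ≤ x ⬝ᵥ x := by
    simpa [sq, signVec_mul_self] using sum_filter_block_sq_le (b := b) {0} x
  calc (w ⬝ᵥ cut {i | b i ≠ 0} (scaledGram A x) *ᵥ signVec ξ) ^ 2
      ≤ (∑ L ∈ T, δ ^ 2 * (x ⬝ᵥ x) * a L) * ∑ L ∈ T, W L := by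
        rw [dotProduct_cut_mulVec_firstBlock]
        refine sum_sq_le_sum_mul_sum_of_sq_le_mul _ (fun L _ => ?_)
          (fun L _ => sum_nonneg fun _ _ => sq_nonneg _) fun L hL => ?_
        · exact mul_nonneg (by positivity) (ha L)
        · have hL₀ := ne_of_mem_erase hL
          refine (hA.sq_sum_blocks_le hb hs hk hL₀ hL₀ w (signVec ξ)).trans ?_
          refine (mul_le_mul_of_nonneg_left hfirst <| mul_nonneg (sq_nonneg δ) <|
            mul_nonneg (ha L) <| sum_nonneg fun _ _ => sq_nonneg _).trans_eq ?_
          ring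
    _ ≤ (δ ^ 2 * (x ⬝ᵥ x) * ((x ⬝ᵥ x) / s)) * (w ⬝ᵥ w) := by
        rw [← mul_sum]
        gcongr
        · exact sum_prevBlockMean_le T
        · exact sum_filter_block_sq_le T w
    _ = _ := by ring

end Blocks

section TailBound

open Finset Matrix
open scoped BigOperators Matrix.Norms.L2Operator

variable {ι κ : Type*} [Fintype ι] [Fintype κ] [DecidableEq ι]
variable {A : Matrix κ ι ℝ} {k : ℕ} {δ : ℝ} {x : ι → ℝ} {s : ℕ} {b : ι → ℕ}

lemma HasRIP.abs_signVec_scaledGram_sub_le (hA : HasRIP A k δ) (hb : IsSortedBlocking x s b)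
    (hk : 2 * s ≤ k) (ξ : ι → ℤˣ) :
    |signVec ξ ⬝ᵥ scaledGram A x *ᵥ signVec ξ - x ⬝ᵥ x| ≤ δ * (x ⬝ᵥ x) +
      2 * |signVec ξ ⬝ᵥ cut {i | b i ≠ 0} (scaledGram A x) *ᵥ signVec ξ| +
        |signVec ξ ⬝ᵥ tailBlocks b (scaledGram A x) *ᵥ signVec ξ| := by
  have hsame := hA.abs_sum_sameBlock_sub_le (fun L => (hb.card_le L).trans (by lia)) x ξ
  rw [dotProduct_mulVec_eq_add_tailBlocks b (scaledGram_transpose A x), add_sub_right_comm,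
    add_sub_right_comm]
  refine (abs_add_three _ _ _).trans ?_
  rw [abs_mul, abs_two]
  gcongr

lemma HasRIP.expect_exp_cut_firstBlock_le (hA : HasRIP A k δ) (hb : IsSortedBlocking x s b)
    (hs : 0 < s) (hk : 2 * s ≤ k) (t : ℝ) :
    𝔼 ξ, exp (t * (signVec ξ ⬝ᵥ cut {i | b i ≠ 0} (scaledGram A x) *ᵥ signVec ξ)) ≤
      exp (t ^ 2 / 2 * (δ ^ 2 * (x ⬝ᵥ x) ^ 2 / s)) := by
  refine (expect_exp_mul_cut_le _ _ t).trans <|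
    expect_le univ_nonempty fun ξ _ => ?_
  gcongr
  exact hA.cut_firstBlock_mulVec_dotProduct_self_le hb hs hk ξ

lemma HasRIP.expect_exp_tailBlocks_le (hA : HasRIP A k δ) (hδ : 0 ≤ δ)
    (hb : IsSortedBlocking x s b) (hs : 0 < s) (hk : 2 * s ≤ k) {t : ℝ}
    (ht : 128 * (t * (δ * (x ⬝ᵥ x) / s)) ^ 2 ≤ 1) :
    𝔼 ξ, exp (t * (signVec ξ ⬝ᵥ tailBlocks b (scaledGram A x) *ᵥ signVec ξ)) ≤
      exp (16 * t ^ 2 * (δ ^ 2 * (x ⬝ᵥ x) ^ 2 / s)) := by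
  set M := tailBlocks b (scaledGram A x) with hM
  have hnorm : 128 * ‖t • M‖ ^ 2 ≤ 1 := by
    rw [norm_smul, mul_pow, norm_eq_abs, sq_abs]
    rw [mul_pow] at ht
    refine le_trans ?_ ht
    gcongr
    exact hA.norm_tailBlocks_le hδ hb hs hk
  have htrace : (t • M).trace = 0 := by
    simp [hM, trace, tailBlocks]
  have hfrob : ∑ i, ∑ j, (t • M) i j ^ 2 ≤ t ^ 2 * (δ ^ 2 * (x ⬝ᵥ x) ^ 2 / s) := by
    simp only [Matrix.smul_apply, smul_eq_mul, mul_pow, ← mul_sum]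
    gcongr
    exact hA.sum_sq_tailBlocks_le hb hs hk
  calc 𝔼 ξ, exp (t * (signVec ξ ⬝ᵥ M *ᵥ signVec ξ))
      = 𝔼 ξ, exp (signVec ξ ⬝ᵥ (t • M) *ᵥ signVec ξ) := by
        simp only [smul_mulVec, dotProduct_smul, smul_eq_mul]
    _ ≤ exp ((t • M).trace + 16 * ∑ i, ∑ j, (t • M) i j ^ 2) := expect_exp_chaos_le hnorm
    _ ≤ _ := by
        rw [exp_le_exp, htrace]
        linarith

lemma HasRIP.dens_cut_firstBlock_le (hA : HasRIP A k δ) (hδ : 0 < δ)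
    (hb : IsSortedBlocking x s b) (hs : 0 < s) (hk : 2 * s ≤ k) (hx : 0 < x ⬝ᵥ x) :
    (dens {ξ | δ * (x ⬝ᵥ x) / 2 ≤
      |signVec ξ ⬝ᵥ cut {i | b i ≠ 0} (scaledGram A x) *ᵥ signVec ξ|} : ℝ) ≤
        2 * exp (-s / 8) := by
  have : (0 : ℝ) < s := by exact_mod_cast hs
  set l : ℝ := s / (2 * (δ * (x ⬝ᵥ x))) with hl
  have hvar : l ^ 2 / 2 * (δ ^ 2 * (x ⬝ᵥ x) ^ 2 / s) = s / 8 := by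
    rw [hl]; field_simp; norm_num
  have hmean : s / 8 - l * (δ * (x ⬝ᵥ x) / 2) = -s / 8 := by
    rw [hl]; field_simp; norm_num
  have hpos := hA.expect_exp_cut_firstBlock_le hb hs hk l
  have hneg := hA.expect_exp_cut_firstBlock_le hb hs hk (-l)
  rw [neg_sq] at hneg
  rw [hvar] at hpos hneg
  simpa only [hmean] using
    dens_abs_le_exp_of_expect_exp_le (by positivity) hpos hneg (δ * (x ⬝ᵥ x) / 2)

lemma HasRIP.dens_tailBlocks_le (hA : HasRIP A k δ) (hδ : 0 < δ)
    (hb : IsSortedBlocking x s b) (hs : 0 < s) (hk : 2 * s ≤ k) (hx : 0 < x ⬝ᵥ x) :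
    (dens {ξ | 2 * (δ * (x ⬝ᵥ x)) ≤
      |signVec ξ ⬝ᵥ tailBlocks b (scaledGram A x) *ᵥ signVec ξ|} : ℝ) ≤ 2 * exp (-s / 18) := by
  have : (0 : ℝ) < s := by exact_mod_cast hs
  set l : ℝ := s / (12 * (δ * (x ⬝ᵥ x))) with hl
  have hsmall : l * (δ * (x ⬝ᵥ x) / s) = 1 / 12 := by
    rw [hl]; field_simp
  have hvar : 16 * l ^ 2 * (δ ^ 2 * (x ⬝ᵥ x) ^ 2 / s) = s / 9 := by
    rw [hl]; field_simp; norm_num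
  have hmean : s / 9 - l * (2 * (δ * (x ⬝ᵥ x))) = -s / 18 := by
    rw [hl]; field_simp; norm_num
  have hpos := hA.expect_exp_tailBlocks_le hδ.le hb hs hk (t := l) (by rw [hsmall]; norm_num)
  have hneg := hA.expect_exp_tailBlocks_le hδ.le hb hs hk (t := -l)
    (by rw [neg_mul, hsmall]; norm_num)
  rw [neg_sq] at hneg
  rw [hvar] at hpos hneg
  simpa only [hmean] using
    dens_abs_le_exp_of_expect_exp_le (by positivity) hpos hneg (2 * (δ * (x ⬝ᵥ x)))

lemma HasRIP.dens_scaledGram_le (hA : HasRIP A k δ) (hδ : 0 < δ) (hs : 0 < s)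
    (hk : 2 * s ≤ k) (hx : 0 < x ⬝ᵥ x) :
    (dens {ξ | 4 * δ * (x ⬝ᵥ x) < |signVec ξ ⬝ᵥ scaledGram A x *ᵥ signVec ξ - x ⬝ᵥ x|} : ℝ) ≤
      4 * exp (-s / 18) := by
  obtain ⟨b, hb⟩ := exists_isSortedBlocking x hs
  set near : Finset (ι → ℤˣ) := {ξ | δ * (x ⬝ᵥ x) / 2 ≤
    |signVec ξ ⬝ᵥ cut {i | b i ≠ 0} (scaledGram A x) *ᵥ signVec ξ|}
  set far : Finset (ι → ℤˣ) := {ξ | 2 * (δ * (x ⬝ᵥ x)) ≤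
    |signVec ξ ⬝ᵥ tailBlocks b (scaledGram A x) *ᵥ signVec ξ|}
  have hsub : ({ξ | 4 * δ * (x ⬝ᵥ x) < |signVec ξ ⬝ᵥ scaledGram A x *ᵥ signVec ξ - x ⬝ᵥ x|} :
      Finset (ι → ℤˣ)) ⊆ near ∪ far := by
    intro ξ hξ
    simp only [near, far, mem_union, mem_filter_univ] at hξ ⊢
    by_contra! h
    linarith [hA.abs_signVec_scaledGram_sub_le hb hk ξ]
  have hexp : exp (-s / 8) ≤ exp (-s / 18 : ℝ) := by
    have : (0 : ℝ) ≤ s := s.cast_nonneg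
    rw [exp_le_exp]
    linarith
  calc _ ≤ (dens near + dens far : ℝ) := by
        exact_mod_cast (dens_le_dens hsub).trans (dens_union_le near far)
    _ ≤ 2 * exp (-s / 8) + 2 * exp (-s / 18) :=
        add_le_add (hA.dens_cut_firstBlock_le hδ hb hs hk hx) (hA.dens_tailBlocks_le hδ hb hs hk hx)
    _ ≤ _ := by linarith

end TailBound

section SignMeasure

open Finset

lemma card_prod_units_int_eq_one (d : ℕ) :
    #{ξ : Fin d → ℤˣ | ∏ i, ξ i = 1} = 2 ^ (d - 1) := by
  cases d with
  | zero => simp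
  | succ d =>
    calc #{ξ : Fin (d + 1) → ℤˣ | ∏ i, ξ i = 1} = #(univ : Finset (Fin d → ℤˣ)) := by
          refine card_nbij' (fun ξ => Fin.tail ξ) (fun η => Fin.cons (∏ i, η i) η)
            (fun ξ _ => mem_univ _) (fun η _ => ?_) (fun ξ hξ => ?_) fun η _ => Fin.tail_cons _ _
          · simp [Fin.prod_univ_succ]
          · have hξ' : ξ 0 * ∏ i, Fin.tail ξ i = 1 := by
              simpa [Fin.prod_univ_succ, Fin.tail] using hξ
            dsimp only
            rw [← Int.units_inv_eq_self (∏ i, Fin.tail ξ i), ← eq_inv_of_mul_eq_one_left hξ',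
              Fin.cons_self_tail]
      _ = 2 ^ (d + 1 - 1) := by simp

lemma signVec_injective {ι : Type*} : Function.Injective (signVec : (ι → ℤˣ) → ι → ℝ) := by
  intro ξ η h
  ext i
  simpa [signVec] using congr_fun h i

lemma prod_signVec {ι : Type*} [Fintype ι] (ξ : ι → ℤˣ) :
    ∏ i, signVec ξ i = ((∏ i, ξ i : ℤˣ) : ℤ) := by
  simp [signVec]

lemma setOf_signs_prod_eq_one_eq_image (d : ℕ) :
    {v : Fin d → ℝ | (∀ i, v i = 1 ∨ v i = -1) ∧ ∏ i, v i = 1} =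
      signVec '' {ξ | ∏ i, ξ i = 1} := by
  ext v
  constructor
  · rintro ⟨hv, hprod⟩
    have hsign : signVec (fun i => if v i = 1 then 1 else -1) = v := by
      ext i
      rcases hv i with h | h <;> norm_num [signVec, h]
    rw [← hsign, prod_signVec] at hprod
    exact ⟨_, Units.val_eq_one.1 (by exact_mod_cast hprod), hsign⟩
  · rintro ⟨ξ, hξ, rfl⟩
    refine ⟨fun i => ?_, by simp [prod_signVec, Set.mem_ofPred.1 hξ]⟩
    rcases Int.units_eq_one_or (ξ i) with h | h <;> simp [signVec, h]

open scoped Classical in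
lemma signMeasure_apply (d : ℕ) (t : Set (Fin d → ℝ)) :
    signMeasure d t = ((2 ^ (d - 1) : ℕ) : ℝ≥0∞)⁻¹ *
      #{ξ : Fin d → ℤˣ | ∏ i, ξ i = 1 ∧ signVec ξ ∈ t} := by
  have himage : t ∩ signVec '' {ξ | ∏ i, ξ i = 1} =
      (({ξ | ∏ i, ξ i = 1 ∧ signVec ξ ∈ t} : Finset (Fin d → ℤˣ)).image signVec : Set _) := by
    ext v
    simp only [coe_image, coe_filter, mem_univ, true_and]
    constructor
    · rintro ⟨hv, ξ, hξ, rfl⟩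
      exact ⟨ξ, ⟨hξ, hv⟩, rfl⟩
    · rintro ⟨ξ, ⟨hξ, hv⟩, rfl⟩
      exact ⟨hv, ξ, hξ, rfl⟩
  rw [signMeasure, setOf_signs_prod_eq_one_eq_image, Measure.smul_apply, smul_eq_mul,
    Measure.restrict_apply' (Set.toFinite _).measurableSet, himage, Measure.count_apply_finset,
    card_image_of_injective _ signVec_injective]

instance isProbabilityMeasure_signMeasure (d : ℕ) : IsProbabilityMeasure (signMeasure d) := by
  refine ⟨?_⟩
  simp only [signMeasure_apply, Set.mem_univ, and_true, card_prod_units_int_eq_one]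
  exact ENNReal.inv_mul_cancel (by simp) (by simp)

lemma signMeasure_le_two_mul_dens {d : ℕ} {t : Set (Fin d → ℝ)} {S : Finset (Fin d → ℤˣ)}
    (h : ∀ ξ, signVec ξ ∈ t → ξ ∈ S) : signMeasure d t ≤ ENNReal.ofReal (2 * dens S) := by
  classical
  have hcard : #{ξ : Fin d → ℤˣ | ∏ i, ξ i = 1 ∧ signVec ξ ∈ t} ≤ #S :=
    card_le_card fun ξ hξ => h ξ ((mem_filter_univ ξ).1 hξ).2
  have hpow : (2 : ℝ) ^ d ≤ 2 * 2 ^ (d - 1) := by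
    rw [← pow_succ']
    exact pow_le_pow_right₀ one_le_two (by lia)
  have hpow' : ((2 ^ (d - 1) : ℕ) : ℝ≥0∞)⁻¹ = ENNReal.ofReal ((2 ^ (d - 1))⁻¹) := by
    rw [ENNReal.ofReal_inv_of_pos (by positivity), ENNReal.ofReal_pow zero_le_two]
    simp
  rw [signMeasure_apply, hpow', ← ENNReal.ofReal_natCast, ← ENNReal.ofReal_mul (by positivity)]
  refine ENNReal.ofReal_le_ofReal ?_
  calc ((2 : ℝ) ^ (d - 1))⁻¹ * #{ξ : Fin d → ℤˣ | ∏ i, ξ i = 1 ∧ signVec ξ ∈ t}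
      ≤ 2 / 2 ^ d * #S := by
        gcongr
        rw [inv_eq_one_div, div_le_div_iff₀ (by positivity) (by positivity), one_mul]
        exact hpow
    _ = 2 * dens S := by
        simp [dens, div_mul_eq_mul_div, mul_div_assoc]

end SignMeasure

section UnionBound

open Finset

lemma one_sub_le_measure_setOf_forall_mem {α Ω : Type*} [MeasurableSpace Ω] {μ : Measure Ω}
    [IsProbabilityMeasure μ] {E : Finset α} {p : α → Ω → Prop} {q : ℝ} (hq : 0 ≤ q)
    (h : ∀ x ∈ E, μ {ω | ¬p x ω} ≤ ENNReal.ofReal q) :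
    ENNReal.ofReal (1 - #E * q) ≤ μ {ω | ∀ x ∈ E, p x ω} := by
  have hcompl : {ω | ∀ x ∈ E, p x ω}ᶜ = ⋃ x ∈ E, {ω | ¬p x ω} := by
    ext ω; simp
  have hbad : μ {ω | ∀ x ∈ E, p x ω}ᶜ ≤ ENNReal.ofReal (#E * q) := by
    calc μ {ω | ∀ x ∈ E, p x ω}ᶜ ≤ ∑ x ∈ E, μ {ω | ¬p x ω} :=
          hcompl ▸ measure_biUnion_finset_le _ _
      _ ≤ ∑ _ ∈ E, ENNReal.ofReal q := sum_le_sum h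
      _ = ENNReal.ofReal (#E * q) := by
        rw [sum_const, nsmul_eq_mul, ENNReal.ofReal_mul (by positivity), ENNReal.ofReal_natCast]
  rw [ENNReal.ofReal_sub 1 (by positivity), ENNReal.ofReal_one, tsub_le_iff_right]
  calc 1 = μ Set.univ := measure_univ.symm
    _ ≤ _ := measure_univ_le_add_compl {ω | ∀ x ∈ E, p x ω}
    _ ≤ _ := by gcongr

end UnionBound

section Main

open Finset Matrix

variable {m d : ℕ}

lemma l2norm_sq (x : Fin d → ℝ) : l2norm x ^ 2 = x ⬝ᵥ x := by
  rw [l2norm, Real.sq_sqrt (sum_nonneg fun i _ => sq_nonneg _)]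
  simp [dotProduct, sq]

open scoped Matrix.Norms.L2Operator in
lemma bddAbove_ripConst (Φ : Matrix (Fin m) (Fin d) ℝ) (k : ℕ) :
    BddAbove {r : ℝ | ∃ x : Fin d → ℝ, l2norm x = 1 ∧
      #{i | x i ≠ 0} ≤ k ∧ r = |l2norm (Φ.mulVec x) ^ 2 - 1|} := by
  refine ⟨‖Φ‖ ^ 2 + 1, ?_⟩
  rintro _ ⟨x, hx, -, rfl⟩
  have hΦ := mulVec_dotProduct_mulVec_self_le Φ x
  rw [← l2norm_sq, ← l2norm_sq, hx, one_pow, mul_one] at hΦ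
  rw [abs_le]
  constructor <;> linarith [sq_nonneg (l2norm (Φ *ᵥ x)), sq_nonneg ‖Φ‖]

lemma hasRIP_of_ripConst_le {Φ : Matrix (Fin m) (Fin d) ℝ} {k : ℕ} {δ : ℝ}
    (h : ripConst Φ k ≤ δ) : HasRIP Φ k δ := by
  intro u hu
  rcases eq_or_ne u 0 with rfl | hu0
  · simp
  have hpos : 0 < u ⬝ᵥ u := (dotProduct_self_nonneg u).lt_of_ne' (by simpa using hu0)
  have hc : (l2norm u)⁻¹ * (l2norm u)⁻¹ = (u ⬝ᵥ u)⁻¹ := by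
    rw [← l2norm_sq, sq, mul_inv]
  have hunit : l2norm ((l2norm u)⁻¹ • u) ^ 2 = 1 := by
    simp [l2norm_sq, ← mul_assoc, hc, hpos.ne']
  have hle : |l2norm (Φ *ᵥ ((l2norm u)⁻¹ • u)) ^ 2 - 1| ≤ δ := by
    refine (le_csSup (bddAbove_ripConst Φ k) ⟨(l2norm u)⁻¹ • u, ?_, ?_, rfl⟩).trans h
    · exact (pow_eq_one_iff_of_nonneg (Real.sqrt_nonneg _) two_ne_zero).1 hunit
    · exact (card_le_card fun i hi => by by_contra h; simp_all).trans hu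
  have hscale : l2norm (Φ *ᵥ ((l2norm u)⁻¹ • u)) ^ 2 - 1 =
      (Φ *ᵥ u ⬝ᵥ Φ *ᵥ u - u ⬝ᵥ u) / (u ⬝ᵥ u) := by
    rw [l2norm_sq, mulVec_smul, smul_dotProduct, dotProduct_smul, smul_eq_mul, smul_eq_mul,
      ← mul_assoc, hc, sub_div, div_self hpos.ne', inv_mul_eq_div]
  rwa [hscale, abs_div, abs_of_pos hpos, div_le_iff₀ hpos] at hle

lemma l2norm_mul_diagonal_mulVec_sq (Φ : Matrix (Fin m) (Fin d) ℝ) (v x : Fin d → ℝ) :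
    l2norm ((Φ * diagonal v) *ᵥ x) ^ 2 = v ⬝ᵥ scaledGram Φ x *ᵥ v := by
  have hcomm : diagonal v *ᵥ x = diagonal x *ᵥ v := by
    ext i; simp [mulVec_diagonal, mul_comm]
  rw [l2norm_sq, scaledGram, dotProduct_transpose_mul_self_mulVec, ← mulVec_mulVec, hcomm,
    mulVec_mulVec]

lemma HasRIP.signMeasure_distortion_le {Φ : Matrix (Fin m) (Fin d) ℝ} {k s : ℕ} {ε : ℝ}
    (hΦ : HasRIP Φ k (ε / 4)) (hε : 0 < ε) (hs : 0 < s) (hk : 2 * s ≤ k) (x : Fin d → ℝ) :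
    signMeasure d {v | ¬((1 - ε) * l2norm x ^ 2 ≤ l2norm ((Φ * diagonal v) *ᵥ x) ^ 2 ∧
      l2norm ((Φ * diagonal v) *ᵥ x) ^ 2 ≤ (1 + ε) * l2norm x ^ 2)} ≤
        ENNReal.ofReal (8 * exp (-s / 18)) := by
  simp only [l2norm_mul_diagonal_mulVec_sq]
  simp only [l2norm_sq]
  rcases (dotProduct_self_nonneg x).eq_or_lt with hx | hx
  · obtain rfl : x = 0 := by simpa using hx.symm
    simp [scaledGram]
  have hdens := hΦ.dens_scaledGram_le (by positivity) hs hk hx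
  refine (signMeasure_le_two_mul_dens fun ξ hξ => (mem_filter_univ ξ).2 ?_).trans
    (ENNReal.ofReal_le_ofReal ((mul_le_mul_of_nonneg_left hdens zero_le_two).trans_eq (by ring)))
  simp only [Set.mem_ofPred_eq] at hξ
  contrapose! hξ
  constructor <;> linarith [abs_le.1 hξ]

lemma card_mul_exp_half_le {n k : ℕ} {η : ℝ} (hn : 0 < n) (hη : 0 < η) (hη1 : η < 1)
    (hk : 60 * log (4 * n / η) ≤ k) :
    0 < k / 2 ∧ n * (8 * exp (-(k / 2 : ℕ) / 18)) ≤ η := by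
  have hn' : (1 : ℝ) ≤ n := by exact_mod_cast hn
  set L := log (4 * n / η) with hL
  have hL4 : 2 * log 2 ≤ L := by
    rw [← log_rpow two_pos]
    refine log_le_log (by positivity) ?_
    rw [le_div_iff₀ hη]
    norm_num
    linarith
  have hlog2 := log_two_gt_d9
  have hk2 : (k : ℝ) ≤ 2 * (k / 2 : ℕ) + 1 := by
    exact_mod_cast (by lia : k ≤ 2 * (k / 2) + 1)
  refine ⟨?_, ?_⟩
  · have : (0 : ℝ) < (k / 2 : ℕ) := by linarith
    exact_mod_cast this
  have hlog8 : log (n * 8 / η) = L + log 2 := by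
    rw [hL, ← log_mul (by positivity) two_ne_zero]
    ring_nf
  have hexp : n * 8 / η ≤ exp ((k / 2 : ℕ) / 18) := by
    rw [← log_le_iff_le_exp (by positivity), hlog8]
    linarith
  rw [neg_div, Real.exp_neg, ← mul_assoc, ← div_eq_mul_inv, div_le_comm₀ (by positivity) hη]
  exact hexp

theorem rip_to_jl_general {η ε : ℝ} (hη : 0 < η) (hε : 0 < ε) {d m : ℕ}
    (E : Finset (Fin d → ℝ)) {k : ℕ} (hk : 60 * log (4 * #E / η) ≤ k)
    {Φ : Matrix (Fin m) (Fin d) ℝ} (hΦ : ripConst Φ k ≤ ε / 4) :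
    signMeasure d {v : Fin d → ℝ | ∀ x ∈ E,
        (1 - ε) * l2norm x ^ 2 ≤ l2norm ((Φ * diagonal v) *ᵥ x) ^ 2 ∧
        l2norm ((Φ * diagonal v) *ᵥ x) ^ 2 ≤ (1 + ε) * l2norm x ^ 2} ≥
      ENNReal.ofReal (1 - η) := by
  rcases le_or_gt 1 η with hη1 | hη1
  · simp [ENNReal.ofReal_of_nonpos (sub_nonpos.2 hη1)]
  rcases E.eq_empty_or_nonempty with rfl | hE
  · simp [hη.le]
  obtain ⟨hs, hsum⟩ := card_mul_exp_half_le hE.card_pos hη hη1 hk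
  have hbad (x : Fin d → ℝ) (_ : x ∈ E) :=
    (hasRIP_of_ripConst_le hΦ).signMeasure_distortion_le hε hs (Nat.mul_div_le k 2) x
  exact (ENNReal.ofReal_le_ofReal (by linarith)).trans
    (one_sub_le_measure_setOf_forall_mem (by positivity) hbad)

end Main

/-- **Modified Krahmer–Ward theorem**: a matrix with the restricted isometry property,
randomized by a diagonal matrix of signs which are uniform conditioned on having product one,
yields a Johnson–Lindenstrauss embedding of any fixed finite point set. -/
theorem rip_to_jl :
    ∃ C : ℝ, 0 < C ∧
      ∀ (η ε : ℝ), 0 < η → 0 < ε → ε < 1 →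
      ∀ (d m n : ℕ) (E : Finset (Fin d → ℝ)), E.card = n →
      ∀ k : ℕ, C * Real.log (4 * n / η) ≤ k →
      ∀ δ : ℝ, δ ≤ ε / 4 →
      ∀ Φ : Matrix (Fin m) (Fin d) ℝ, ripConst Φ k ≤ δ →
      signMeasure d {v : Fin d → ℝ | ∀ x ∈ E,
          (1 - ε) * l2norm x ^ 2 ≤ l2norm ((Φ * Matrix.diagonal v).mulVec x) ^ 2 ∧
          l2norm ((Φ * Matrix.diagonal v).mulVec x) ^ 2 ≤ (1 + ε) * l2norm x ^ 2} ≥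
        ENNReal.ofReal (1 - η) :=
  ⟨60, by norm_num, fun _ _ hη hε _ _ _ _ E hE _ hk _ hδ _ hΦ =>
    rip_to_jl_general hη hε E (hE ▸ hk) (hΦ.trans hδ)⟩

end KacJL
end
end

section
/- There is an absolute constant C > 0 (C = 2.25 suffices) such that the following holds. Let d ≥ 25, let x be a random vector taking values in S^{d−1}, let Q_t be an ORA walk of length t on ℝ^d independent of x, let p be a positive integer with p ≤ d, and let t ≥ C p d log d. Then E[S_p(Q_t x)] ≤ 2^{p−2} d^{1−p} / p!. -/
noncomputable section

open MeasureTheory Real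
open scoped ENNReal

namespace KacJL

instance matrixMeasurableSpace {m n : Type*} : MeasurableSpace (Matrix m n ℝ) :=
  inferInstanceAs (MeasurableSpace (m → n → ℝ))

/-- The rotation by angle `θ` in the `(i,j)` coordinate plane of `ℝ^d`. -/
def rotM (d : ℕ) (i j : Fin d) (θ : ℝ) : Matrix (Fin d) (Fin d) ℝ :=
  Matrix.of fun k l =>
    if k = i ∧ l = i then Real.cos θ
    else if k = i ∧ l = j then -Real.sin θ
    else if k = j ∧ l = i then Real.sin θ
    else if k = j ∧ l = j then Real.cos θ
    else if k = l then 1 else 0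

/-- The uniform distribution on pairs of distinct coordinates in `Fin d`. -/
def pairUniform (d : ℕ) : Measure (Fin d × Fin d) :=
  ((d * (d - 1) : ℕ) : ℝ≥0∞)⁻¹ •
    (Measure.count.restrict {p : Fin d × Fin d | p.1 ≠ p.2})

/-- The product `R_{i_T,j_T,π/4} ⋯ R_{i_1,j_1,π/4}` of ORA rotations determined by the
pairs `ω`. -/
def oraMatrix {d T : ℕ} (ω : Fin T → Fin d × Fin d) : Matrix (Fin d) (Fin d) ℝ :=
  ((List.ofFn fun t => rotM d (ω t).1 (ω t).2 (Real.pi / 4)).reverse).prod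

/-- `S_k(x) = (1/(2k)!) ∑ i, x_i^{2k}`. -/
def Sk {d : ℕ} (k : ℕ) (x : Fin d → ℝ) : ℝ :=
  (((2 * k).factorial : ℝ))⁻¹ * ∑ i, x i ^ (2 * k)


/-!
The walk operator preserves the span of the symmetrized even monomials `∏ x_k ^ (2 m_k)`, and
`S_p` is the sum of those with a single exponent, so it suffices to follow how coefficients spread.
Averaging a pair of coordinates acts on binary forms in `(x_i, x_j)` by a rotation, an isometry for
the Fischer inner product; with the Krawtchouk polynomials as matrix coefficients, Cauchy–Schwarz
bounds the expansion in the weight `∏ c_(m_k) / m_k!` when both exponents are nonzero, whereas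
pairs with exactly one nonzero exponent contract it. Exponents equal to `1` are exchanged for a
factor of order `1 / d` using `∑ x_k ^ 2 ≤ 1`. If the total degree is at most `d / 7`, most
exponents vanish and the contraction wins by a factor `1 - 1 / (2 d)` per step, so that
`2 p d log d` steps absorb the initial loss `d ^ p`. Larger `p` reduce to `p ≈ d / 8` by
monotonicity.
-/

section Fischer

open Polynomial Finset
open scoped Nat

variable {R : Type*} [CommRing R]

theorem sum_coeff_X_add_C_mul {f : R[X]} {n : ℕ} (hf : f.natDegree ≤ n) (s : R) (w : ℕ × ℕ → R) :
    ∑ e ∈ antidiagonal (n + 1), ((X + C s) * f).coeff e.1 * w e =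
      ∑ e ∈ antidiagonal n, f.coeff e.1 * (w (e.1 + 1, e.2) + s * w (e.1, e.2 + 1)) := by
  have hX : ∑ e ∈ antidiagonal (n + 1), (X * f).coeff e.1 * w e =
      ∑ e ∈ antidiagonal n, f.coeff e.1 * w (e.1 + 1, e.2) := by
    simp [Nat.sum_antidiagonal_succ]
  have hC : ∑ e ∈ antidiagonal (n + 1), (C s * f).coeff e.1 * w e =
      ∑ e ∈ antidiagonal n, f.coeff e.1 * (s * w (e.1, e.2 + 1)) := by
    have hlast : f.coeff (n + 1) = 0 := coeff_eq_zero_of_natDegree_lt (by lia)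
    simp [Nat.sum_antidiagonal_succ', hlast, mul_comm s, mul_assoc]
  simp only [add_mul, coeff_add, sum_add_distrib, hX, hC, mul_add]

/-- The Fischer product of two binary forms of degree `n`, for which `x ^ k * y ^ l` has square
norm `k! * l!` and multiplication by a variable is adjoint to differentiation. Forms are
dehomogenized: `X ^ k` stands for `x ^ k * y ^ (n - k)`. -/
def fischer (n : ℕ) (f g : R[X]) : R :=
  ∑ e ∈ antidiagonal n, f.coeff e.1 * g.coeff e.1 * (e.1 ! * e.2 !)

theorem fischer_C_mul (n : ℕ) (c : R) (f g : R[X]) :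
    fischer n f (C c * g) = c * fischer n f g := by
  simp only [fischer, coeff_C_mul, mul_sum]
  exact sum_congr rfl fun e _ => by ring

-- On forms the adjoint of multiplication by `x + s * y` is `∂/∂x + s * ∂/∂y`; dehomogenizing,
-- Euler's identity turns `∂/∂y` into `n + 1 - X * d/dX`.
theorem fischer_X_add_C_mul {f : R[X]} {n : ℕ} (hf : f.natDegree ≤ n) (s : R) (g : R[X]) :
    fischer (n + 1) ((X + C s) * f) g =
      fischer n f ((1 - C s * X) * derivative g + C (s * (n + 1)) * g) := by
  have h := sum_coeff_X_add_C_mul hf s fun e => g.coeff e.1 * (e.1 ! * e.2 !)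
  simp only [fischer, mul_assoc] at h ⊢
  rw [h]
  refine sum_congr rfl fun ⟨k, l⟩ hkl => ?_
  have hn : (n : R) = k + l := by rw [← HasAntidiagonal.mem_antidiagonal.1 hkl, Nat.cast_add]
  have hcoeff : (X * derivative g).coeff k = k * g.coeff k := by
    cases k <;> simp [coeff_derivative, mul_comm]
  simp only [sub_mul, one_mul, mul_assoc, coeff_add, coeff_sub, coeff_C_mul, hcoeff,
    coeff_derivative, Nat.factorial_succ, Nat.cast_mul, Nat.cast_succ, hn]
  ring

end Fischer

section Krawtchouk

open Polynomial Finset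
open scoped Nat

/-- The form `(x + y) ^ a * (x - y) ^ b`, dehomogenized by `y = 1`. Its coefficients are the values
of the Krawtchouk polynomials. -/
def krawtchouk (a b : ℕ) : ℝ[X] := (X + 1) ^ a * (X - 1) ^ b

theorem krawtchouk_succ_left (a b : ℕ) :
    krawtchouk (a + 1) b = (X + C 1) * krawtchouk a b := by
  simp only [krawtchouk, map_one]
  ring

theorem krawtchouk_succ_right (a b : ℕ) :
    krawtchouk a (b + 1) = (X + C (-1)) * krawtchouk a b := by
  simp only [krawtchouk, map_neg, map_one]
  ring

theorem natDegree_krawtchouk_le (a b : ℕ) : (krawtchouk a b).natDegree ≤ a + b := by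
  unfold krawtchouk
  compute_degree

theorem sum_coeff_krawtchouk (a b : ℕ) (x y : ℝ) :
    ∑ e ∈ antidiagonal (a + b), (krawtchouk a b).coeff e.1 * (x ^ e.1 * y ^ e.2) =
      (x + y) ^ a * (x - y) ^ b := by
  have hmul (s : ℝ) {n : ℕ} {f : ℝ[X]} (hf : f.natDegree ≤ n) :
      ∑ e ∈ antidiagonal (n + 1), ((X + C s) * f).coeff e.1 * (x ^ e.1 * y ^ e.2) =
        (x + s * y) * ∑ e ∈ antidiagonal n, f.coeff e.1 * (x ^ e.1 * y ^ e.2) := by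
    rw [sum_coeff_X_add_C_mul hf s fun e => x ^ e.1 * y ^ e.2, mul_sum]
    exact sum_congr rfl fun e _ => by ring
  induction a with
  | succ a ih =>
    rw [krawtchouk_succ_left, add_right_comm, hmul 1 (natDegree_krawtchouk_le a b), ih]
    ring
  | zero =>
    induction b with
    | zero => simp [krawtchouk]
    | succ b ih =>
      rw [krawtchouk_succ_right, ← add_assoc, hmul (-1) (natDegree_krawtchouk_le 0 b), ih]
      ring

theorem fischer_krawtchouk_self (a b : ℕ) :
    fischer (a + b) (krawtchouk a b) (krawtchouk a b) = 2 ^ (a + b) * (a ! * b !) := by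
  induction a with
  | succ a ih =>
    have hadj : (1 - C 1 * X) * derivative (krawtchouk (a + 1) b) +
        C (1 * ((a + b : ℕ) + 1 : ℝ)) * krawtchouk (a + 1) b =
          C (2 * (a + 1 : ℝ)) * krawtchouk a b := by
      cases b <;> simp [krawtchouk, derivative_pow, map_ofNat C 2] <;> ring
    nth_rw 1 [krawtchouk_succ_left]
    rw [add_right_comm, fischer_X_add_C_mul (natDegree_krawtchouk_le a b), hadj, fischer_C_mul,
      ih, Nat.factorial_succ]
    push_cast
    ring
  | zero =>
    induction b with
    | zero => simp [krawtchouk, fischer]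
    | succ b ih =>
      have hadj : (1 - C (-1) * X) * derivative (krawtchouk 0 (b + 1)) +
          C (-1 * ((0 + b : ℕ) + 1 : ℝ)) * krawtchouk 0 (b + 1) =
            C (2 * (b + 1 : ℝ)) * krawtchouk 0 b := by
        simp [krawtchouk, derivative_pow, map_ofNat C 2]
        ring
      nth_rw 1 [krawtchouk_succ_right]
      rw [← add_assoc, fischer_X_add_C_mul (natDegree_krawtchouk_le 0 b), hadj, fischer_C_mul,
        ih, Nat.factorial_succ]
      push_cast
      ring

theorem sum_antidiagonal_two_mul_filter_even {M : Type*} [AddCommMonoid M] (n : ℕ)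
    (f : ℕ × ℕ → M) :
    ∑ e ∈ antidiagonal (2 * n) with Even e.2, f e =
      ∑ e ∈ antidiagonal n, f (2 * e.1, 2 * e.2) := by
  refine (sum_bij (fun e _ => (2 * e.1, 2 * e.2)) ?_ ?_ ?_ fun _ _ => rfl).symm
  · simp only [HasAntidiagonal.mem_antidiagonal, mem_filter]
    exact fun e he => ⟨by lia, even_two_mul _⟩
  · simp only [Prod.ext_iff]
    lia
  · rintro ⟨k, l⟩ h
    obtain ⟨hkl, c, rfl⟩ := by
      simpa only [mem_filter, HasAntidiagonal.mem_antidiagonal] using h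
    exact ⟨(n - c, c), by rw [HasAntidiagonal.mem_antidiagonal]; lia, by rw [Prod.mk.injEq]; lia⟩

theorem sum_even_coeff_krawtchouk (m q : ℕ) (x y : ℝ) :
    ∑ e ∈ antidiagonal (m + q),
        (krawtchouk (2 * m) (2 * q)).coeff (2 * e.1) * (x ^ (2 * e.1) * y ^ (2 * e.2)) =
      ((x + y) ^ (2 * m) * (x - y) ^ (2 * q) + (x - y) ^ (2 * m) * (x + y) ^ (2 * q)) / 2 := by
  have hneg := sum_coeff_krawtchouk (2 * m) (2 * q) x (-y)
  rw [sub_neg_eq_add, ← sub_eq_add_neg] at hneg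
  rw [← sum_coeff_krawtchouk, ← hneg, ← mul_add, ← sum_add_distrib, sum_div,
    ← sum_antidiagonal_two_mul_filter_even (m + q) fun e =>
      (krawtchouk (2 * m) (2 * q)).coeff e.1 * (x ^ e.1 * y ^ e.2), sum_filter]
  refine sum_congr rfl fun e _ => ?_
  obtain h | h := Nat.even_or_odd e.2
  · rw [if_pos h, h.neg_pow]
    ring
  · rw [if_neg (Nat.not_even_iff_odd.2 h), h.neg_pow]
    ring

theorem sum_even_coeff_sq_krawtchouk_le (m q : ℕ) :
    ∑ e ∈ antidiagonal (m + q),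
        (krawtchouk (2 * m) (2 * q)).coeff (2 * e.1) ^ 2 * ((2 * e.1)! * (2 * e.2)!) ≤
      4 ^ (m + q) * ((2 * m)! * (2 * q)!) := by
  have hnorm := fischer_krawtchouk_self (2 * m) (2 * q)
  rw [← mul_add, pow_mul, show (2 : ℝ) ^ 2 = 4 by norm_num] at hnorm
  rw [← hnorm, fischer, ← sum_antidiagonal_two_mul_filter_even (m + q) fun e =>
    (krawtchouk (2 * m) (2 * q)).coeff e.1 ^ 2 * (e.1 ! * e.2 !)]
  simp only [← pow_two]
  exact sum_le_sum_of_subset_of_nonneg (filter_subset _ _) fun e _ _ => by positivity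

end Krawtchouk

section CentralBinom

open Finset

theorem two_mul_sum_antidiagonal_fst_mul (n : ℕ) (f : ℕ → ℕ) :
    2 * ∑ e ∈ antidiagonal n, e.1 * (f e.1 * f e.2) = n * ∑ e ∈ antidiagonal n, f e.1 * f e.2 := by
  rw [two_mul]
  nth_rw 1 [← Nat.sum_antidiagonal_swap]
  rw [← sum_add_distrib, mul_sum]
  refine sum_congr rfl fun e he => ?_
  rw [← HasAntidiagonal.mem_antidiagonal.1 he]
  simp only [Prod.fst_swap, Prod.snd_swap]
  ring

theorem sum_antidiagonal_centralBinom_mul (n : ℕ) :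
    ∑ e ∈ antidiagonal n, e.1.centralBinom * e.2.centralBinom = 4 ^ n := by
  induction n with
  | zero => simp
  | succ n ih =>
    refine Nat.eq_of_mul_eq_mul_left n.succ_pos ?_
    calc (n + 1) * ∑ e ∈ antidiagonal (n + 1), e.1.centralBinom * e.2.centralBinom
        = 2 * ∑ e ∈ antidiagonal (n + 1), e.1 * (e.1.centralBinom * e.2.centralBinom) :=
          (two_mul_sum_antidiagonal_fst_mul _ _).symm
      _ = 2 * ∑ e ∈ antidiagonal n, (4 * (e.1 * (e.1.centralBinom * e.2.centralBinom)) +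
            2 * (e.1.centralBinom * e.2.centralBinom)) := by
          rw [Nat.sum_antidiagonal_succ, zero_mul, zero_add]
          congr! 2 with e
          rw [← mul_assoc, Nat.succ_mul_centralBinom_succ]
          ring
      _ = 4 * (2 * ∑ e ∈ antidiagonal n, e.1 * (e.1.centralBinom * e.2.centralBinom)) +
            4 * ∑ e ∈ antidiagonal n, e.1.centralBinom * e.2.centralBinom := by
          rw [sum_add_distrib, ← mul_sum, ← mul_sum]
          ring
      _ = (n + 1) * 4 ^ (n + 1) := by
          rw [two_mul_sum_antidiagonal_fst_mul, ih]
          ring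

theorem add_one_mul_centralBinom_add_one (n : ℕ) :
    ((n : ℝ) + 1) * (n + 1).centralBinom = 2 * (2 * n + 1) * n.centralBinom :=
  mod_cast Nat.succ_mul_centralBinom_succ n

theorem le_centralBinom_sq_mul {n : ℕ} (hn : 2 ≤ n) :
    9 / 32 * 16 ^ n ≤ (n.centralBinom : ℝ) ^ 2 * n := by
  induction n, hn using Nat.le_induction with
  | base => norm_num [Nat.centralBinom, Nat.choose]
  | succ n hn ih =>
    have hpos : (0 : ℝ) < (n + 1) * n := by positivity
    refine le_of_mul_le_mul_left ?_ hpos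
    calc ((n : ℝ) + 1) * n * (9 / 32 * 16 ^ (n + 1))
        = 16 * (n * (n + 1)) * (9 / 32 * 16 ^ n) := by ring
      _ ≤ (2 * (2 * n + 1)) ^ 2 * (n.centralBinom ^ 2 * n) := by
          gcongr ?_ * ?_
          nlinarith
      _ = n * (2 * (2 * n + 1) * n.centralBinom) ^ 2 := by ring
      _ = ((n : ℝ) + 1) * n * ((n + 1).centralBinom ^ 2 * (n + 1 : ℕ)) := by
          rw [← add_one_mul_centralBinom_add_one]
          push_cast
          ring

theorem le_centralBinom_mul_centralBinom_mul_add {m q : ℕ} (hm : 2 ≤ m) (hq : 2 ≤ q) :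
    9 / 16 * 4 ^ (m + q) ≤ (m.centralBinom : ℝ) * q.centralBinom * (m + q) := by
  refine (pow_le_pow_iff_left₀ (by positivity) (by positivity) two_ne_zero).1 ?_
  calc (9 / 16 * 4 ^ (m + q) : ℝ) ^ 2 = 4 * ((9 / 32 * 16 ^ m) * (9 / 32 * 16 ^ q)) := by
        rw [mul_pow, ← pow_mul, mul_comm (m + q), pow_mul, pow_add]
        norm_num
        ring
    _ ≤ 4 * ((m.centralBinom ^ 2 * m) * (q.centralBinom ^ 2 * q)) := by
        gcongr 4 * (?_ * ?_)
        exacts [le_centralBinom_sq_mul hm, le_centralBinom_sq_mul hq]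
    _ = (m.centralBinom * q.centralBinom) ^ 2 * (4 * (m * q)) := by ring
    _ ≤ (m.centralBinom * q.centralBinom) ^ 2 * (m + q) ^ 2 := by
        gcongr
        linarith [four_mul_le_sq_add (m : ℝ) q]
    _ = (m.centralBinom * q.centralBinom * (m + q)) ^ 2 := by ring

theorem centralBinom_le_mul_four_pow {n : ℕ} (hn : 4 ≤ n) :
    (n.centralBinom : ℝ) ≤ 35 / 128 * 4 ^ n := by
  induction n, hn using Nat.le_induction with
  | base => norm_num [Nat.centralBinom, Nat.choose]
  | succ n _ ih =>
    refine le_of_mul_le_mul_left ?_ n.cast_add_one_pos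
    rw [add_one_mul_centralBinom_add_one, pow_succ]
    nlinarith

end CentralBinom

section Transition

open Polynomial Finset
open scoped Nat

/-- The even monomials in one variable, normalized so that `Sk k x = ∑ i, evenPow k (x i)`. -/
def evenPow (k : ℕ) (x : ℝ) : ℝ := x ^ (2 * k) / (2 * k)!

theorem evenPow_nonneg (k : ℕ) (x : ℝ) : 0 ≤ evenPow k x :=
  div_nonneg ((even_two_mul k).pow_nonneg x) (by positivity)

theorem evenPow_neg (k : ℕ) (x : ℝ) : evenPow k (-x) = evenPow k x := by
  rw [evenPow, evenPow, (even_two_mul k).neg_pow]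

/-- The coefficient of `evenPow e.1 x * evenPow e.2 y` in the even part of the polynomial
`evenPow m ((x + y) / √2) * evenPow q ((x - y) / √2)`, where `e.1 + e.2 = m + q`. -/
def transition (m q : ℕ) (e : ℕ × ℕ) : ℝ :=
  (krawtchouk (2 * m) (2 * q)).coeff (2 * e.1) * ((2 * e.1)! * (2 * e.2)!) /
    (2 ^ (m + q) * ((2 * m)! * (2 * q)!))

theorem div_sqrt_two_pow (x : ℝ) (k : ℕ) : (x / √2) ^ (2 * k) = x ^ (2 * k) / 2 ^ k := by
  rw [div_pow, pow_mul √2, sq_sqrt zero_le_two]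

theorem sum_transition_mul_evenPow (m q : ℕ) (x y : ℝ) :
    ∑ e ∈ antidiagonal (m + q), transition m q e * (evenPow e.1 x * evenPow e.2 y) =
      (evenPow m ((x + y) / √2) * evenPow q ((x - y) / √2) +
        evenPow m ((x - y) / √2) * evenPow q ((x + y) / √2)) / 2 := by
  have hterm (e : ℕ × ℕ) : transition m q e * (evenPow e.1 x * evenPow e.2 y) =
      (krawtchouk (2 * m) (2 * q)).coeff (2 * e.1) * (x ^ (2 * e.1) * y ^ (2 * e.2)) /
        (2 ^ (m + q) * ((2 * m)! * (2 * q)!)) := by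
    simp only [transition, evenPow]
    field
  rw [sum_congr rfl fun e _ => hterm e, ← sum_div, sum_even_coeff_krawtchouk]
  simp only [evenPow, div_sqrt_two_pow]
  field

theorem sum_transition_sq_div_le (m q : ℕ) :
    ∑ e ∈ antidiagonal (m + q), transition m q e ^ 2 / ((2 * e.1)! * (2 * e.2)!) ≤
      1 / ((2 * m)! * (2 * q)! : ℝ) := by
  have hterm (e : ℕ × ℕ) : transition m q e ^ 2 / ((2 * e.1)! * (2 * e.2)!) =
      (krawtchouk (2 * m) (2 * q)).coeff (2 * e.1) ^ 2 * ((2 * e.1)! * (2 * e.2)!) /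
        (4 ^ (m + q) * ((2 * m)! * (2 * q)!) ^ 2) := by
    rw [show (4 : ℝ) = 2 ^ 2 by norm_num, ← pow_mul, pow_mul', transition]
    field
  simp only [hterm, ← sum_div]
  rw [div_le_div_iff₀ (by positivity) (by positivity), one_mul, pow_two (_ * _),
    ← mul_assoc (4 ^ (m + q) : ℝ)]
  exact mul_le_mul_of_nonneg_right (sum_even_coeff_sq_krawtchouk_le m q) (by positivity)

theorem choose_two_mul_mul_factorial (e : ℕ × ℕ) :
    ((2 * (e.1 + e.2)).choose (2 * e.1) : ℝ) * ((2 * e.1)! * (2 * e.2)!) =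
      (2 * (e.1 + e.2))! := by
  rw [mul_add, Nat.choose_symm_add, ← mul_assoc]
  exact mod_cast Nat.add_choose_mul_factorial_mul_factorial (2 * e.1) (2 * e.2)

theorem transition_zero_right {m : ℕ} {e : ℕ × ℕ} (he : e ∈ antidiagonal m) :
    transition m 0 e = 1 / 2 ^ m := by
  obtain rfl := HasAntidiagonal.mem_antidiagonal.1 he
  simp only [transition, krawtchouk, mul_zero, pow_zero, mul_one, coeff_X_add_one_pow,
    choose_two_mul_mul_factorial, add_zero, Nat.factorial_zero, Nat.cast_one]
  field

theorem transition_zero_left {q : ℕ} {e : ℕ × ℕ} (he : e ∈ antidiagonal q) :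
    transition 0 q e = 1 / 2 ^ q := by
  obtain rfl := HasAntidiagonal.mem_antidiagonal.1 he
  have hcoeff : ((X - 1 : ℝ[X]) ^ (2 * (e.1 + e.2))).coeff (2 * e.1) =
      (2 * (e.1 + e.2)).choose (2 * e.1) := by
    rw [sub_eq_add_neg, ← C_1, ← C_neg, coeff_X_add_C_pow, mul_add, Nat.add_sub_cancel_left,
      (even_two_mul _).neg_one_pow, one_mul]
  simp only [transition, krawtchouk, mul_zero, pow_zero, one_mul, hcoeff,
    choose_two_mul_mul_factorial, zero_add, Nat.factorial_zero, Nat.cast_one]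
  field

end Transition

section Weights

open Finset
open scoped Nat

/-- The numerators of `partWeight`. The value at `1` is what one removal of a part equal to `1`
gains, and the others are small enough for `sum_transition_mul_partWeight_le`. -/
def weightConst : ℕ → ℝ
  | 0 => 1
  | 1 => 3 / 10
  | _ + 2 => 1 / 4

/-- The contribution of a part `l` of an exponent to the weight of the exponent. -/
def partWeight (l : ℕ) : ℝ := weightConst l / l !

theorem weightConst_pos : ∀ l, 0 < weightConst l
  | 0 => by norm_num [weightConst]
  | 1 => by norm_num [weightConst]
  | _ + 2 => by norm_num [weightConst]

theorem weightConst_of_two_le : ∀ {l}, 2 ≤ l → weightConst l = 1 / 4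
  | _ + 2, _ => rfl

theorem weightConst_add_one_mul_le :
    ∀ {l k : ℕ}, 1 ≤ l + k → weightConst (l + 1) * weightConst (k + 1) ≤ 3 / 40
  | 0, _ + 1, _ => by norm_num [weightConst]
  | _ + 1, 0, _ => by norm_num [weightConst]
  | _ + 1, _ + 1, _ => by norm_num [weightConst]

theorem partWeight_pos (l : ℕ) : 0 < partWeight l :=
  div_pos (weightConst_pos l) (by positivity)

theorem partWeight_zero : partWeight 0 = 1 := by
  simp [partWeight, weightConst]

theorem partWeight_one : partWeight 1 = 3 / 10 := by
  simp [partWeight, weightConst]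

theorem factorial_two_mul_mul_partWeight_sq (l : ℕ) :
    ((2 * l)! : ℝ) * partWeight l ^ 2 = l.centralBinom * weightConst l ^ 2 := by
  have hfac : ((2 * l)! : ℝ) = l.centralBinom * l ! * l ! := by
    rw [two_mul, ← Nat.add_choose_mul_factorial_mul_factorial l l,
      Nat.centralBinom_eq_two_mul_choose, two_mul]
    push_cast
    rfl
  rw [hfac, partWeight]
  field

theorem sum_mul_weightConst_pow_le {n : ℕ} (hn : 3 ≤ n) {a : ℕ × ℕ → ℝ} (ha : ∀ e, 0 ≤ a e)
    (r : ℕ) :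
    ∑ e ∈ antidiagonal n, a e * (weightConst e.1 * weightConst e.2) ^ r ≤
      (3 / 40) ^ r * ∑ e ∈ antidiagonal n, a e +
        ((1 / 4) ^ r - (3 / 40) ^ r) * (a (0, n) + a (n, 0)) := by
  obtain ⟨n, rfl⟩ := Nat.exists_eq_add_of_le' (show 2 ≤ n by lia)
  have hinner : ∑ e ∈ antidiagonal n, a (e.1 + 1, e.2 + 1) *
      (weightConst (e.1 + 1) * weightConst (e.2 + 1)) ^ r ≤
        (3 / 40) ^ r * ∑ e ∈ antidiagonal n, a (e.1 + 1, e.2 + 1) := by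
    rw [mul_sum]
    refine sum_le_sum fun e he => ?_
    rw [mul_comm]
    have hpos := mul_pos (weightConst_pos (e.1 + 1)) (weightConst_pos (e.2 + 1))
    have hle := weightConst_add_one_mul_le (l := e.1) (k := e.2)
      (by rw [HasAntidiagonal.mem_antidiagonal.1 he]; lia)
    exact mul_le_mul_of_nonneg_right (pow_le_pow_left₀ hpos.le hle r) (ha _)
  have hends (f : ℕ × ℕ → ℝ) : ∑ e ∈ antidiagonal (n + 2), f e =
      f (0, n + 2) + (f (n + 2, 0) + ∑ e ∈ antidiagonal n, f (e.1 + 1, e.2 + 1)) := by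
    rw [Nat.sum_antidiagonal_succ, Nat.sum_antidiagonal_succ']
  have hzero : weightConst 0 = 1 := rfl
  have hlast : weightConst (n + 2) = 1 / 4 := rfl
  rw [hends, hends]
  simp only [hzero, hlast, one_mul, mul_one]
  linarith

theorem sum_transition_zero_mul_partWeight_le {n : ℕ} (hn : 2 ≤ n) :
    ∑ e ∈ antidiagonal n, 1 / 2 ^ n * (partWeight e.1 * partWeight e.2) ≤
      17 / 25 * partWeight n := by
  have hterm : ∑ e ∈ antidiagonal n, 1 / 2 ^ n * (partWeight e.1 * partWeight e.2) =
      (∑ e ∈ antidiagonal n, (n.choose e.1 : ℝ) * (weightConst e.1 * weightConst e.2) ^ 1) /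
        (2 ^ n * n !) := by
    rw [sum_div]
    refine sum_congr rfl fun e he => ?_
    obtain rfl := HasAntidiagonal.mem_antidiagonal.1 he
    rw [Nat.choose_symm_add, ← Nat.add_choose_mul_factorial_mul_factorial e.1 e.2, partWeight,
      partWeight]
    have := Nat.choose_pos (Nat.le_add_left e.2 e.1)
    push_cast
    field
  have hsum : ∑ e ∈ antidiagonal n, (n.choose e.1 : ℝ) * (weightConst e.1 * weightConst e.2) ^ 1 ≤
      17 / 100 * 2 ^ n := by
    obtain rfl | h3 := hn.eq_or_lt'
    · norm_num [Nat.sum_antidiagonal_succ, weightConst]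
    · have hchoose : ∑ e ∈ antidiagonal n, (n.choose e.1 : ℝ) = 2 ^ n := by
        rw [Nat.sum_antidiagonal_eq_sum_range_succ fun k _ => (n.choose k : ℝ)]
        exact mod_cast Nat.sum_range_choose n
      have h8 : (2 : ℝ) ^ 3 ≤ 2 ^ n := pow_le_pow_right₀ one_le_two h3
      have h := sum_mul_weightConst_pow_le h3 (a := fun e => (n.choose e.1 : ℝ))
        (fun e => Nat.cast_nonneg _) 1
      rw [hchoose, Nat.choose_zero_right, Nat.choose_self] at h
      norm_num at h h8 ⊢
      linarith
  rw [hterm, partWeight, weightConst_of_two_le hn, div_le_iff₀ (by positivity)]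
  exact hsum.trans_eq (by field)

theorem sq_sum_transition_mul_partWeight_le (m q : ℕ) :
    (∑ e ∈ antidiagonal (m + q), |transition m q e| * (partWeight e.1 * partWeight e.2)) ^ 2 *
        ((2 * m)! * (2 * q)!) ≤
      ∑ e ∈ antidiagonal (m + q),
        (e.1.centralBinom * e.2.centralBinom : ℝ) * (weightConst e.1 * weightConst e.2) ^ 2 := by
  have hcs := sum_sq_le_sum_mul_sum_of_sq_le_mul (antidiagonal (m + q))
    (r := fun e => |transition m q e| * (partWeight e.1 * partWeight e.2))
    (f := fun e => transition m q e ^ 2 / ((2 * e.1)! * (2 * e.2)!))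
    (g := fun e => (e.1.centralBinom * e.2.centralBinom : ℝ) *
      (weightConst e.1 * weightConst e.2) ^ 2)
    (fun e _ => by positivity) (fun e _ => by positivity) fun e _ => by
      rw [mul_pow |_|, sq_abs, mul_pow (weightConst e.1), mul_mul_mul_comm,
        ← factorial_two_mul_mul_partWeight_sq, ← factorial_two_mul_mul_partWeight_sq]
      exact le_of_eq (by field)
  rw [← le_div_iff₀ (by positivity), div_eq_mul_one_div, mul_comm]
  exact hcs.trans (mul_le_mul_of_nonneg_right (sum_transition_sq_div_le m q)
    (sum_nonneg fun e _ => by positivity))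

theorem sum_transition_mul_partWeight_le_of_two_le {m q : ℕ} (hm : 2 ≤ m) (hq : 2 ≤ q) :
    ∑ e ∈ antidiagonal (m + q), |transition m q e| * (partWeight e.1 * partWeight e.2) ≤
      21 / 10 * (m + q) * (partWeight m * partWeight q) := by
  have hfac : (0 : ℝ) < (2 * m)! * (2 * q)! := by positivity
  have hupper := sum_mul_weightConst_pow_le (n := m + q) (by lia)
    (a := fun e => (e.1.centralBinom * e.2.centralBinom : ℝ)) (fun e => by positivity) 2
  have hconv : ∑ e ∈ antidiagonal (m + q), (e.1.centralBinom * e.2.centralBinom : ℝ) =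
      4 ^ (m + q) := mod_cast sum_antidiagonal_centralBinom_mul (m + q)
  have hends := centralBinom_le_mul_four_pow (n := m + q) (by lia)
  have hlower := le_centralBinom_mul_centralBinom_mul_add hm hq
  have hn : (4 : ℝ) ≤ m + q := by exact_mod_cast add_le_add hm hq
  have hpos := mul_pos (partWeight_pos m) (partWeight_pos q)
  refine (abs_le_of_sq_le_sq' (le_of_mul_le_mul_right ?_ hfac) (by positivity)).2
  calc _ ≤ _ := sq_sum_transition_mul_partWeight_le m q
    _ ≤ 3 / 80 * 4 ^ (m + q) := by
        rw [hconv, Nat.centralBinom_zero] at hupper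
        norm_num at hupper
        linarith
    _ ≤ (21 / 10) ^ 2 / 256 * (9 / 16 * 4 ^ (m + q)) * (m + q) := by
        nlinarith [pow_pos (zero_lt_four' ℝ) (m + q)]
    _ ≤ (21 / 10) ^ 2 / 256 * (m.centralBinom * q.centralBinom * (m + q)) * (m + q) := by
        gcongr
    _ = (21 / 10 * (m + q)) ^ 2 *
          (((2 * m)! * partWeight m ^ 2) * ((2 * q)! * partWeight q ^ 2)) := by
        rw [factorial_two_mul_mul_partWeight_sq, factorial_two_mul_mul_partWeight_sq,
          weightConst_of_two_le hm, weightConst_of_two_le hq]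
        ring
    _ = _ := by ring

/-- The factor by which averaging a pair of coordinates with exponents `m` and `q` changes the
weight: a contraction when exactly one of them vanishes, and a possible expansion when neither
does. -/
def pairFactor (m q : ℕ) : ℝ :=
  1 - 8 / 25 * ((if m = 0 then 0 else 1) + (if q = 0 then 0 else 1)) +
    21 / 10 * (m * (if q = 0 then 0 else 1) + (if m = 0 then 0 else 1) * q)

theorem sum_transition_mul_partWeight_le {m q : ℕ} (hm : m ≠ 1) (hq : q ≠ 1) :
    ∑ e ∈ antidiagonal (m + q), |transition m q e| * (partWeight e.1 * partWeight e.2) ≤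
      pairFactor m q * (partWeight m * partWeight q) := by
  obtain rfl | hm2 : m = 0 ∨ 2 ≤ m := by lia
  · obtain rfl | hq2 : q = 0 ∨ 2 ≤ q := by lia
    · simp [partWeight_zero, pairFactor, transition_zero_left]
    · have h := sum_transition_zero_mul_partWeight_le hq2
      rw [zero_add, sum_congr rfl fun e he => by
        rw [transition_zero_left he, abs_of_pos (by positivity)]]
      norm_num [pairFactor, partWeight_zero, (by lia : q ≠ 0)] at h ⊢
      linarith
  · obtain rfl | hq2 : q = 0 ∨ 2 ≤ q := by lia
    · have h := sum_transition_zero_mul_partWeight_le hm2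
      rw [add_zero, sum_congr rfl fun e he => by
        rw [transition_zero_right he, abs_of_pos (by positivity)]]
      norm_num [pairFactor, partWeight_zero, (by lia : m ≠ 0)] at h ⊢
      linarith
    · refine (sum_transition_mul_partWeight_le_of_two_le hm2 hq2).trans ?_
      have hpos := mul_pos (partWeight_pos m) (partWeight_pos q)
      rw [pairFactor, if_neg (by lia), if_neg (by lia)]
      nlinarith

end Weights

section PairUpdate

open Finset Function

variable {ι β : Type*} [DecidableEq ι]

/-- The family `x` with its values at the two indices `e.1` and `e.2` replaced by `v.1` and
`v.2`. -/
def updatePair (x : ι → β) (e : ι × ι) (v : β × β) : ι → β :=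
  update (update x e.1 v.1) e.2 v.2

@[to_additive]
theorem prod_updatePair {M : Type*} [CommMonoid M] [Fintype ι] (g : ι → β → M) (x : ι → β)
    {e : ι × ι} (he : e.1 ≠ e.2) (v : β × β) :
    ∏ k, g k (updatePair x e v k) =
      g e.1 v.1 * g e.2 v.2 * ∏ k ∈ {e.1, e.2}ᶜ, g k (x k) := by
  rw [← prod_mul_prod_compl {e.1, e.2}, prod_pair he]
  congr 1
  · simp [updatePair, he]
  · refine prod_congr rfl fun k hk => ?_
    simp only [mem_compl, mem_insert, mem_singleton, not_or] at hk
    simp [updatePair, hk]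

@[to_additive]
theorem prod_eq_mul_mul_prod_compl_pair {M : Type*} [CommMonoid M] [Fintype ι] (g : ι → M)
    {e : ι × ι} (he : e.1 ≠ e.2) : ∏ k, g k = g e.1 * g e.2 * ∏ k ∈ {e.1, e.2}ᶜ, g k := by
  rw [← prod_mul_prod_compl {e.1, e.2}, prod_pair he]

@[to_additive]
theorem prod_update_of_eq_one {M : Type*} [CommMonoid M] [Fintype ι] (g : ι → β → M) {x : ι → β}
    {i : ι} (hi : g i (x i) = 1) (a : β) :
    ∏ k, g k (update x i a k) = g i a * ∏ k, g k (x k) := by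
  rw [← mul_prod_erase univ _ (mem_univ i), ← mul_prod_erase univ _ (mem_univ i), hi, one_mul,
    update_self]
  congr 1
  exact prod_congr rfl fun k hk => by rw [update_of_ne (ne_of_mem_erase hk)]

/-- The rotation `R_{i,j,π/4}` for `e = (i, j)`, with the orientation of `rotM`. -/
def oraStep (e : ι × ι) (x : ι → ℝ) : ι → ℝ :=
  updatePair x e ((x e.1 - x e.2) / √2, (x e.1 + x e.2) / √2)

theorem oraStep_comp_perm (e : ι × ι) (x : ι → ℝ) (σ : Equiv.Perm ι) :
    oraStep e x ∘ σ = oraStep (σ.symm e.1, σ.symm e.2) (x ∘ σ) := by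
  simp only [oraStep, updatePair, comp_apply, Equiv.apply_symm_apply]
  rw [update_comp_equiv, update_comp_equiv]

end PairUpdate

section Walk

open Finset Function
open scoped BigOperators

variable {ι : Type*} [Fintype ι]

theorem expect_offDiag_swap {M : Type*} [AddCommMonoid M] [Module ℚ≥0 M] (f : ι × ι → M) :
    𝔼 e ∈ univ.offDiag, f e.swap = 𝔼 e ∈ univ.offDiag, f e :=
  expect_equiv (Equiv.prodComm ι ι) (by simp [eq_comm]) fun _ _ => rfl

variable (ι) in
/-- The closed Euclidean unit ball, in coordinates. -/
def euclideanBall : Set (ι → ℝ) := {x | ∑ i, x i ^ 2 ≤ 1}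

theorem sq_le_one_of_mem_euclideanBall {x : ι → ℝ} (hx : x ∈ euclideanBall ι) (i : ι) :
    x i ^ 2 ≤ 1 :=
  (single_le_sum (f := fun k => x k ^ 2) (fun _ _ => sq_nonneg _) (mem_univ i)).trans hx

variable [DecidableEq ι]

theorem sum_oraStep_sq {e : ι × ι} (he : e.1 ≠ e.2) (x : ι → ℝ) :
    ∑ i, oraStep e x i ^ 2 = ∑ i, x i ^ 2 := by
  rw [oraStep, sum_updatePair (fun _ a => a ^ 2) x he,
    sum_eq_add_add_sum_compl_pair (fun i => x i ^ 2) he, div_pow, div_pow, sq_sqrt zero_le_two]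
  ring

theorem oraStep_mem_euclideanBall {e : ι × ι} (he : e.1 ≠ e.2) {x : ι → ℝ}
    (hx : x ∈ euclideanBall ι) : oraStep e x ∈ euclideanBall ι :=
  (sum_oraStep_sq he x).trans_le hx

variable (ι) in
/-- The Markov operator of the ORA walk, acting on functions. -/
def oraOp : Module.End ℝ ((ι → ℝ) → ℝ) where
  toFun f x := 𝔼 e ∈ univ.offDiag, f (oraStep e x)
  map_add' _ _ := funext fun _ => expect_add_distrib ..
  map_smul' _ _ := funext fun _ => (mul_expect ..).symm

theorem oraOp_apply (f : (ι → ℝ) → ℝ) (x : ι → ℝ) :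
    oraOp ι f x = 𝔼 e ∈ univ.offDiag, f (oraStep e x) :=
  rfl

theorem oraOp_pow_succ_apply (t : ℕ) (f : (ι → ℝ) → ℝ) (x : ι → ℝ) :
    (oraOp ι ^ (t + 1)) f x = 𝔼 e ∈ univ.offDiag, (oraOp ι ^ t) f (oraStep e x) := by
  rw [pow_succ', Module.End.mul_apply, oraOp_apply]

theorem oraOp_pow_one [Nontrivial ι] (t : ℕ) : (oraOp ι ^ t) 1 = 1 := by
  obtain ⟨i, j, hij⟩ := exists_pair_ne ι
  have hpairs : (univ : Finset ι).offDiag.Nonempty := ⟨(i, j), by simpa using hij⟩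
  induction t with
  | zero => rfl
  | succ t ih =>
    ext x
    simp only [oraOp_pow_succ_apply, ih, Pi.one_apply, expect_const hpairs]

theorem oraOp_pow_mono {f g : (ι → ℝ) → ℝ} (hfg : ∀ x ∈ euclideanBall ι, f x ≤ g x) (t : ℕ) :
    ∀ x ∈ euclideanBall ι, (oraOp ι ^ t) f x ≤ (oraOp ι ^ t) g x := by
  induction t with
  | zero => exact hfg
  | succ t ih =>
    intro x hx
    simp only [oraOp_pow_succ_apply]
    exact expect_le_expect fun e he =>
      ih _ (oraStep_mem_euclideanBall (mem_offDiag.1 he).2.2 hx)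

theorem oraOp_pow_nonneg {f : (ι → ℝ) → ℝ} (hf : ∀ x ∈ euclideanBall ι, 0 ≤ f x) (t : ℕ)
    {x : ι → ℝ} (hx : x ∈ euclideanBall ι) : 0 ≤ (oraOp ι ^ t) f x := by
  have h := oraOp_pow_mono (f := 0) hf t x hx
  rwa [map_zero, Pi.zero_apply] at h

variable (ι) in
/-- Averaging a function over all permutations of the coordinates. -/
def symmetrize : Module.End ℝ ((ι → ℝ) → ℝ) where
  toFun f x := 𝔼 σ : Equiv.Perm ι, f (x ∘ σ)
  map_add' _ _ := funext fun _ => expect_add_distrib ..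
  map_smul' _ _ := funext fun _ => (mul_expect ..).symm

theorem symmetrize_apply (f : (ι → ℝ) → ℝ) (x : ι → ℝ) :
    symmetrize ι f x = 𝔼 σ : Equiv.Perm ι, f (x ∘ σ) :=
  rfl

theorem oraOp_symmetrize (f : (ι → ℝ) → ℝ) :
    oraOp ι (symmetrize ι f) = symmetrize ι (oraOp ι f) := by
  ext x
  simp only [oraOp_apply, symmetrize_apply]
  rw [expect_comm]
  refine expect_congr rfl fun σ _ => expect_equiv (σ.symm.prodCongr σ.symm) (by simp) fun e _ => ?_
  rw [oraStep_comp_perm]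
  rfl

end Walk

section Monomials

open Finset Function
open scoped BigOperators

variable {ι : Type*} [Fintype ι]

/-- The monomial `∏ k, x k ^ (2 * m k)`, normalized by the factorials of its exponents. -/
def evenMonomial (m : ι → ℕ) (x : ι → ℝ) : ℝ :=
  ∏ k, evenPow (m k) (x k)

theorem evenMonomial_nonneg (m : ι → ℕ) (x : ι → ℝ) : 0 ≤ evenMonomial m x :=
  prod_nonneg fun _ _ => evenPow_nonneg ..

theorem evenMonomial_comp_perm (m : ι → ℕ) (x : ι → ℝ) (σ : Equiv.Perm ι) :
    evenMonomial (m ∘ σ) (x ∘ σ) = evenMonomial m x :=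
  Equiv.prod_comp σ fun k => evenPow (m k) (x k)

variable [DecidableEq ι]

theorem evenMonomial_update_one {m : ι → ℕ} {i : ι} (hi : m i = 0) (x : ι → ℝ) :
    evenMonomial (update m i 1) x = x i ^ 2 / 2 * evenMonomial m x := by
  refine (prod_update_of_eq_one (fun k a => evenPow a (x k)) (by simp [hi, evenPow]) 1).trans ?_
  simp [evenPow, evenMonomial]

theorem evenMonomial_oraStep_add_swap (m : ι → ℕ) {e : ι × ι} (he : e.1 ≠ e.2) (x : ι → ℝ) :
    (evenMonomial m (oraStep e x) + evenMonomial m (oraStep e.swap x)) / 2 =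
      ∑ v ∈ antidiagonal (m e.1 + m e.2),
        transition (m e.1) (m e.2) v * evenMonomial (updatePair m e v) x := by
  have hexpand (v : ℕ × ℕ) : evenMonomial (updatePair m e v) x =
      evenPow v.1 (x e.1) * evenPow v.2 (x e.2) *
        ∏ k ∈ {e.1, e.2}ᶜ, evenPow (m k) (x k) :=
    prod_updatePair (fun k a => evenPow a (x k)) m he v
  simp only [hexpand, ← mul_assoc]
  rw [← sum_mul]
  simp only [mul_assoc (transition _ _ _), sum_transition_mul_evenPow, evenMonomial, oraStep]
  rw [prod_updatePair (fun k a => evenPow (m k) a) x he,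
    prod_updatePair (fun k a => evenPow (m k) a) x (e := e.swap) he.symm]
  simp only [Prod.fst_swap, Prod.snd_swap, pair_comm e.2 e.1]
  rw [← neg_sub (x e.1) (x e.2), neg_div, evenPow_neg, add_comm (x e.2)]
  ring

theorem oraOp_evenMonomial (m : ι → ℕ) :
    oraOp ι (evenMonomial m) = 𝔼 e ∈ univ.offDiag, ∑ v ∈ antidiagonal (m e.1 + m e.2),
      transition (m e.1) (m e.2) v • evenMonomial (updatePair m e v) := by
  ext x
  calc oraOp ι (evenMonomial m) x
      = 𝔼 e ∈ univ.offDiag,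
          (evenMonomial m (oraStep e x) + evenMonomial m (oraStep e.swap x)) / 2 := by
        rw [← expect_div, expect_add_distrib,
          expect_offDiag_swap fun e => evenMonomial m (oraStep e x), oraOp_apply, add_self_div_two]
    _ = 𝔼 e ∈ univ.offDiag, ∑ v ∈ antidiagonal (m e.1 + m e.2),
          transition (m e.1) (m e.2) v * evenMonomial (updatePair m e v) x :=
        expect_congr rfl fun e he => evenMonomial_oraStep_add_swap m (mem_offDiag.1 he).2.2 x
    _ = _ := by simp [expect_apply]

/-- The average of the monomials with a given family of exponents, up to order. -/
def symmMonomial (m : ι → ℕ) : (ι → ℝ) → ℝ :=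
  symmetrize ι (evenMonomial m)

theorem symmMonomial_apply (m : ι → ℕ) (x : ι → ℝ) :
    symmMonomial m x = 𝔼 σ : Equiv.Perm ι, evenMonomial m (x ∘ σ) :=
  rfl

theorem symmMonomial_nonneg (m : ι → ℕ) (x : ι → ℝ) : 0 ≤ symmMonomial m x :=
  expect_nonneg fun _ _ => evenMonomial_nonneg ..

theorem symmMonomial_zero : symmMonomial (0 : ι → ℕ) = 1 := by
  ext x
  simp [symmMonomial_apply, evenMonomial, evenPow]

theorem symmMonomial_comp_perm (m : ι → ℕ) (τ : Equiv.Perm ι) :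
    symmMonomial (m ∘ τ) = symmMonomial m := by
  ext x
  refine expect_equiv (Equiv.mulRight τ⁻¹) (by simp) fun σ _ => ?_
  rw [← evenMonomial_comp_perm m (x ∘ _) τ]
  congr 1
  ext k
  simp

theorem oraOp_symmMonomial (m : ι → ℕ) :
    oraOp ι (symmMonomial m) = 𝔼 e ∈ univ.offDiag, ∑ v ∈ antidiagonal (m e.1 + m e.2),
      transition (m e.1) (m e.2) v • symmMonomial (updatePair m e v) := by
  rw [symmMonomial, oraOp_symmetrize, oraOp_evenMonomial]
  refine (map_expect ((symmetrize ι).restrictScalars ℚ≥0) ..).trans ?_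
  simp [symmMonomial]

theorem oraOp_pow_succ_symmMonomial (t : ℕ) (m : ι → ℕ) (x : ι → ℝ) :
    (oraOp ι ^ (t + 1)) (symmMonomial m) x =
      𝔼 e ∈ univ.offDiag, ∑ v ∈ antidiagonal (m e.1 + m e.2),
        transition (m e.1) (m e.2) v * (oraOp ι ^ t) (symmMonomial (updatePair m e v)) x := by
  rw [pow_succ, Module.End.mul_apply, oraOp_symmMonomial]
  refine (congrFun (map_expect ((oraOp ι ^ t).restrictScalars ℚ≥0) ..) x).trans ?_
  simp [expect_apply]

theorem card_mul_symmMonomial_update_one_le {m : ι → ℕ} {i : ι} (hi : m i = 0) {x : ι → ℝ}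
    (hx : x ∈ euclideanBall ι) :
    #{k | m k = 0} * symmMonomial (update m i 1) x ≤ symmMonomial m x / 2 := by
  have hswap : ∀ k ∈ ({k | m k = 0} : Finset ι),
      symmMonomial (update m k 1) x = symmMonomial (update m i 1) x := by
    intro k hk
    have hk0 : m k = 0 := (mem_filter.1 hk).2
    rw [← symmMonomial_comp_perm (update m i 1) (Equiv.swap i k)]
    congr 2
    ext j
    obtain rfl | hj := eq_or_ne j k
    · simp
    · obtain rfl | hj' := eq_or_ne j i
      · simp [hi, hj, hk0, hj.symm]
      · simp [Equiv.swap_apply_of_ne_of_ne hj' hj, hj, hj']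
  rw [← nsmul_eq_mul, ← sum_const, ← sum_congr rfl hswap]
  simp only [symmMonomial_apply]
  rw [← expect_sum_comm, expect_div]
  refine expect_le_expect fun σ _ => ?_
  rw [sum_congr rfl fun k hk => evenMonomial_update_one (mem_filter.1 hk).2 (x ∘ σ), ← sum_mul,
    div_eq_inv_mul]
  refine mul_le_mul_of_nonneg_right ?_ (evenMonomial_nonneg ..)
  rw [← sum_div, div_eq_inv_mul]
  refine mul_le_of_le_one_right (by norm_num) ?_
  calc ∑ k with m k = 0, (x ∘ σ) k ^ 2 ≤ ∑ k, (x ∘ σ) k ^ 2 :=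
        sum_le_univ_sum_of_nonneg fun _ => sq_nonneg _
    _ = ∑ k, x k ^ 2 := Equiv.sum_comp σ fun k => x k ^ 2
    _ ≤ 1 := hx

end Monomials

section Decay

open Finset Function
open scoped BigOperators Nat

theorem evenPow_le_two_pow_mul_partWeight (k : ℕ) {x : ℝ} (hx : x ^ 2 ≤ 1) :
    evenPow k x ≤ 2 ^ k * partWeight k := by
  have hpow : x ^ (2 * k) ≤ 1 := pow_mul x 2 k ▸ pow_le_one₀ (sq_nonneg x) hx
  refine (div_le_div_of_nonneg_right hpow (by positivity)).trans ?_
  match k with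
  | 0 => simp [partWeight_zero]
  | 1 => norm_num [partWeight_one]
  | k + 2 =>
    have hfac : ((k + 2)! : ℝ) ≤ (2 * (k + 2))! := mod_cast Nat.factorial_le (by lia)
    calc 1 / ((2 * (k + 2))! : ℝ) ≤ 1 / (k + 2)! := by gcongr
      _ ≤ 2 ^ k * (1 / (k + 2)!) := le_mul_of_one_le_left (by positivity) (one_le_pow₀ one_le_two)
      _ = 2 ^ (k + 2) * partWeight (k + 2) := by rw [partWeight, weightConst]; ring

variable {ι : Type*} [Fintype ι]

/-- The weight of a family of exponents: the symmetrized monomials decay to a multiple of it. -/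
def expWeight (m : ι → ℕ) : ℝ := ∏ k, partWeight (m k)

theorem expWeight_pos (m : ι → ℕ) : 0 < expWeight m :=
  prod_pos fun _ _ => partWeight_pos _

theorem card_le_card_filter_eq_zero_add_sum (m : ι → ℕ) :
    Fintype.card ι ≤ #{k | m k = 0} + ∑ k, m k := by
  calc Fintype.card ι = ∑ _k : ι, 1 := Fintype.card_eq_sum_ones
    _ ≤ ∑ k, ((if m k = 0 then 1 else 0) + m k) := sum_le_sum fun k _ => by split_ifs <;> lia
    _ = #{k | m k = 0} + ∑ k, m k := by rw [sum_add_distrib, card_filter]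

theorem sum_offDiag_univ (f : ι × ι → ℝ) :
    ∑ e ∈ univ.offDiag, f e = ∑ i, ∑ j, f (i, j) - ∑ i, f (i, i) := by
  classical
  rw [← sum_product, univ_product_univ, eq_sub_iff_add_eq', ← sum_diag,
    ← sum_union (disjoint_diag_offDiag _), diag_union_offDiag, univ_product_univ]

theorem expect_pairFactor_le (hcard : 16 ≤ Fintype.card ι) {m : ι → ℕ}
    (hm : 7 * ∑ k, m k ≤ Fintype.card ι) (hm0 : m ≠ 0) :
    𝔼 e ∈ univ.offDiag, pairFactor (m e.1) (m e.2) ≤ 1 - 1 / (2 * Fintype.card ι) := by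
  have hd : 16 ≤ (Fintype.card ι : ℝ) := mod_cast hcard
  have hS : 7 * ∑ k, (m k : ℝ) ≤ Fintype.card ι := mod_cast hm
  set d := (Fintype.card ι : ℝ)
  set supp : ℕ → ℝ := fun a => if a = 0 then 0 else 1
  set K : ℝ := ∑ k, supp (m k)
  set S : ℝ := ∑ k, (m k : ℝ)
  have hK : 1 ≤ K := by
    obtain ⟨i, hi⟩ := Function.ne_iff.1 hm0
    calc (1 : ℝ) = supp (m i) := (if_neg hi).symm
      _ ≤ K := single_le_sum (f := fun k => supp (m k))
          (fun k _ => by dsimp only [supp]; split_ifs <;> norm_num) (mem_univ i)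
  have hfactor (a b : ℕ) : pairFactor a b =
      1 - 8 / 25 * (supp a + supp b) + 21 / 10 * (a * supp b + supp a * b) := rfl
  have hdiag (a : ℕ) : pairFactor a a = 1 - 16 / 25 * supp a + 21 / 5 * a := by
    rw [hfactor]
    rcases eq_or_ne a 0 with rfl | ha
    · simp [supp]
    · simp only [supp, if_neg ha]; ring
  have hsum : ∑ e ∈ univ.offDiag, pairFactor (m e.1) (m e.2) =
      d * (d - 1) - 16 / 25 * (d - 1) * K + 21 / 5 * (K - 1) * S := by
    rw [sum_offDiag_univ]
    simp only [hdiag]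
    simp only [hfactor, sum_add_distrib, sum_sub_distrib, ← mul_sum, ← sum_mul, sum_const,
      card_univ, nsmul_eq_mul, mul_one]
    ring
  have hcardOff : ((#(univ : Finset ι).offDiag : ℕ) : ℝ) = d * (d - 1) := by
    rw [offDiag_card, Nat.cast_sub (Nat.le_mul_self _), card_univ]
    push_cast
    ring
  rw [expect_eq_sum_div_card, hcardOff, hsum, div_le_iff₀ (by nlinarith)]
  have hrhs : (1 - 1 / (2 * d)) * (d * (d - 1)) = d * (d - 1) - (d - 1) / 2 := by field
  rw [hrhs]
  nlinarith [mul_nonneg (sub_nonneg.2 hK) (sub_nonneg.2 hS),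
    mul_nonneg (sub_nonneg.2 hK) (sub_nonneg.2 hd)]

variable [DecidableEq ι]

theorem symmMonomial_le_two_pow_mul_expWeight (m : ι → ℕ) {x : ι → ℝ} (hx : x ∈ euclideanBall ι) :
    symmMonomial m x ≤ 2 ^ (∑ k, m k) * expWeight m := by
  refine expect_le univ_nonempty fun σ _ => ?_
  rw [← prod_pow_eq_pow_sum, expWeight, ← prod_mul_distrib]
  exact prod_le_prod (fun _ _ => evenPow_nonneg ..) fun k _ =>
    evenPow_le_two_pow_mul_partWeight _ (sq_le_one_of_mem_euclideanBall hx _)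

theorem symmMonomial_update_one_le {m : ι → ℕ} {i : ι} (hi : m i = 0)
    (hm : 7 * ∑ k, m k ≤ Fintype.card ι) {x : ι → ℝ} (hx : x ∈ euclideanBall ι) :
    symmMonomial (update m i 1) x ≤
      2 / Fintype.card ι * partWeight 1 * symmMonomial m x := by
  have hd : (0 : ℝ) < Fintype.card ι := mod_cast Fintype.card_pos_iff.2 ⟨i⟩
  have hzeros : 5 / 6 * (Fintype.card ι : ℝ) ≤ #{k | m k = 0} := by
    have h : 6 * Fintype.card ι ≤ 7 * #{k | m k = 0} := by
      have := card_le_card_filter_eq_zero_add_sum m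
      lia
    have h' : (6 : ℝ) * Fintype.card ι ≤ 7 * #{k | m k = 0} := mod_cast h
    linarith
  have hle : 5 / 6 * (Fintype.card ι : ℝ) * symmMonomial (update m i 1) x ≤
      symmMonomial m x / 2 :=
    (mul_le_mul_of_nonneg_right hzeros (symmMonomial_nonneg ..)).trans
      (card_mul_symmMonomial_update_one_le hi hx)
  rw [partWeight_one]
  field_simp
  linarith

theorem oraOp_pow_symmMonomial_update_one_le {m : ι → ℕ} {i : ι} (hi : m i = 0)
    (hm : 7 * ∑ k, m k ≤ Fintype.card ι) (t : ℕ) {x : ι → ℝ} (hx : x ∈ euclideanBall ι) :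
    (oraOp ι ^ t) (symmMonomial (update m i 1)) x ≤
      2 / Fintype.card ι * partWeight 1 * (oraOp ι ^ t) (symmMonomial m) x := by
  have h := oraOp_pow_mono (g := (2 / Fintype.card ι * partWeight 1) • symmMonomial m)
    (fun y hy => symmMonomial_update_one_le hi hm hy) t x hx
  rwa [map_smul] at h

variable (ι) in
/-- After `t` steps from anywhere in the ball, every symmetrized monomial of degree `2n ≤ 2p` has
expectation at most `B` times its target size `(2 / d) ^ n * expWeight m`. -/
def MomentBound (p t : ℕ) (B : ℝ) : Prop :=
  ∀ m : ι → ℕ, ∑ k, m k ≤ p → ∀ x ∈ euclideanBall ι,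
    (oraOp ι ^ t) (symmMonomial m) x ≤
      (2 / Fintype.card ι) ^ (∑ k, m k) * expWeight m * B

theorem MomentBound.mono {p t : ℕ} {B B' : ℝ} (h : MomentBound ι p t B) (hB : B ≤ B') :
    MomentBound ι p t B' := fun m hm x hx =>
  (h m hm x hx).trans (mul_le_mul_of_nonneg_left hB
    (mul_nonneg (by positivity) (expWeight_pos m).le))

theorem momentBound_zero [Nonempty ι] (p : ℕ) : MomentBound ι p 0 (Fintype.card ι ^ p) := by
  intro m hm x hx
  have hd : (1 : ℝ) ≤ Fintype.card ι := mod_cast Fintype.card_pos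
  calc symmMonomial m x ≤ 2 ^ (∑ k, m k) * expWeight m :=
        symmMonomial_le_two_pow_mul_expWeight m hx
    _ = (2 / Fintype.card ι) ^ (∑ k, m k) * expWeight m * Fintype.card ι ^ (∑ k, m k) := by
        rw [div_pow]
        field
    _ ≤ (2 / Fintype.card ι) ^ (∑ k, m k) * expWeight m * Fintype.card ι ^ p := by
        have := (expWeight_pos m).le
        gcongr

theorem MomentBound.sum_transition_mul_le {p t : ℕ} {B : ℝ} (h : MomentBound ι p t B) (hB : 0 ≤ B)
    {m : ι → ℕ} (hm : ∑ k, m k ≤ p) (hm1 : ∀ k, m k ≠ 1) {e : ι × ι} (he : e.1 ≠ e.2)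
    {x : ι → ℝ} (hx : x ∈ euclideanBall ι) :
    ∑ v ∈ antidiagonal (m e.1 + m e.2),
        transition (m e.1) (m e.2) v * (oraOp ι ^ t) (symmMonomial (updatePair m e v)) x ≤
      pairFactor (m e.1) (m e.2) * ((2 / Fintype.card ι) ^ (∑ k, m k) * expWeight m * B) := by
  set rest : ℝ := ∏ k ∈ {e.1, e.2}ᶜ, partWeight (m k)
  set c : ℝ := (2 / Fintype.card ι) ^ (∑ k, m k) * rest * B
  have hc : 0 ≤ c :=
    mul_nonneg (mul_nonneg (by positivity) (prod_nonneg fun _ _ => (partWeight_pos _).le)) hB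
  have hterm : ∀ v ∈ antidiagonal (m e.1 + m e.2),
      transition (m e.1) (m e.2) v * (oraOp ι ^ t) (symmMonomial (updatePair m e v)) x ≤
        |transition (m e.1) (m e.2) v| * (partWeight v.1 * partWeight v.2) * c := by
    intro v hv
    have hsum : ∑ k, updatePair m e v k = ∑ k, m k := by
      rw [sum_updatePair (fun _ a => a) m he, HasAntidiagonal.mem_antidiagonal.1 hv,
        ← sum_eq_add_add_sum_compl_pair m he]
    have hbound := h _ (hsum.trans_le hm) x hx
    rw [hsum, expWeight, prod_updatePair (fun _ a => partWeight a) m he] at hbound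
    calc _ ≤ |transition (m e.1) (m e.2) v| *
          (oraOp ι ^ t) (symmMonomial (updatePair m e v)) x :=
          mul_le_mul_of_nonneg_right (le_abs_self _)
            (oraOp_pow_nonneg (fun y _ => symmMonomial_nonneg _ y) t hx)
      _ ≤ _ := mul_le_mul_of_nonneg_left hbound (abs_nonneg _)
      _ = _ := by ring
  calc _ ≤ _ := sum_le_sum hterm
    _ ≤ pairFactor (m e.1) (m e.2) * (partWeight (m e.1) * partWeight (m e.2)) * c := by
        rw [← sum_mul]
        exact mul_le_mul_of_nonneg_right (sum_transition_mul_partWeight_le (hm1 _) (hm1 _)) hc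
    _ = _ := by
        rw [expWeight, prod_eq_mul_mul_prod_compl_pair (fun k => partWeight (m k)) he]
        ring

theorem MomentBound.oraOp_pow_succ_le {p t : ℕ} {B : ℝ} (h : MomentBound ι p t B) (hB : 0 ≤ B)
    (hcard : 16 ≤ Fintype.card ι) (hp : 7 * p ≤ Fintype.card ι) {m : ι → ℕ} (hm : ∑ k, m k ≤ p)
    (hm0 : m ≠ 0) (hm1 : ∀ k, m k ≠ 1) {x : ι → ℝ} (hx : x ∈ euclideanBall ι) :
    (oraOp ι ^ (t + 1)) (symmMonomial m) x ≤
      (2 / Fintype.card ι) ^ (∑ k, m k) * expWeight m * ((1 - 1 / (2 * Fintype.card ι)) * B) := by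
  have hweight := (expWeight_pos m).le
  rw [oraOp_pow_succ_symmMonomial]
  calc _ ≤ 𝔼 e ∈ univ.offDiag, pairFactor (m e.1) (m e.2) *
        ((2 / Fintype.card ι) ^ (∑ k, m k) * expWeight m * B) :=
        expect_le_expect fun e he =>
          h.sum_transition_mul_le hB hm hm1 (mem_offDiag.1 he).2.2 hx
    _ ≤ (1 - 1 / (2 * Fintype.card ι)) *
        ((2 / Fintype.card ι) ^ (∑ k, m k) * expWeight m * B) := by
        rw [← expect_mul]
        gcongr
        exact expect_pairFactor_le hcard (by lia) hm0
    _ = _ := by ring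

theorem MomentBound.succ {p t : ℕ} {B : ℝ} (h : MomentBound ι p t B) (hB : 0 ≤ B)
    (hcard : 16 ≤ Fintype.card ι) (hp : 7 * p ≤ Fintype.card ι) :
    MomentBound ι p (t + 1) (max 1 ((1 - 1 / (2 * Fintype.card ι)) * B)) := by
  have : Nontrivial ι := Fintype.one_lt_card_iff_nontrivial.1 (by lia)
  intro m hm x hx
  induction hn : ∑ k, m k generalizing m with
  | zero =>
    obtain rfl : m = 0 := by simpa [funext_iff] using hn
    simp [symmMonomial_zero, oraOp_pow_one, expWeight, partWeight_zero]
  | succ n ih =>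
    by_cases hm1 : ∀ k, m k ≠ 1
    · have hm0 : m ≠ 0 := by
        rintro rfl
        simp at hn
      rw [← hn]
      refine (h.oraOp_pow_succ_le hB hcard hp hm hm0 hm1 hx).trans ?_
      have := (expWeight_pos m).le
      gcongr
      exact le_max_right ..
    · push Not at hm1
      obtain ⟨i, hi⟩ := hm1
      obtain ⟨m, hmi, rfl⟩ : ∃ m', m' i = 0 ∧ m = update m' i 1 :=
        ⟨update m i 0, by simp, by simp [← hi]⟩
      have hsum : ∑ k, update m i 1 k = 1 + ∑ k, m k :=
        sum_update_of_eq_zero (fun _ a => a) hmi 1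
      have hweight : expWeight (update m i 1) = partWeight 1 * expWeight m :=
        prod_update_of_eq_one (fun _ a => partWeight a) (by rw [hmi, partWeight_zero]) 1
      set B' := max 1 ((1 - 1 / (2 * Fintype.card ι)) * B)
      have hpos := (partWeight_pos 1).le
      calc _ ≤ 2 / Fintype.card ι * partWeight 1 * (oraOp ι ^ (t + 1)) (symmMonomial m) x :=
            oraOp_pow_symmMonomial_update_one_le hmi (by lia) _ hx
        _ ≤ 2 / Fintype.card ι * partWeight 1 *
              ((2 / Fintype.card ι) ^ n * expWeight m * B') := by
            gcongr
            exact ih m (by lia) (by lia)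
        _ = _ := by
            rw [hweight]
            ring

end Decay

section MomentDecay

open Finset Function
open scoped BigOperators Nat

theorem pow_mul_one_sub_pow_le_one {d : ℝ} (hd : 1 ≤ d) {p t : ℕ}
    (ht : 2 * p * d * Real.log d ≤ t) : d ^ p * (1 - 1 / (2 * d)) ^ t ≤ 1 := by
  have hd0 : 0 < d := by linarith
  have hρ : 0 ≤ 1 - 1 / (2 * d) := sub_nonneg.2 (by rw [div_le_one (by linarith)]; linarith)
  calc d ^ p * (1 - 1 / (2 * d)) ^ t
      ≤ Real.exp (Real.log d) ^ p * Real.exp (-(1 / (2 * d))) ^ t := by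
        rw [Real.exp_log hd0]
        gcongr
        exact Real.one_sub_le_exp_neg _
    _ = Real.exp (p * Real.log d - t / (2 * d)) := by
        rw [← Real.exp_nat_mul, ← Real.exp_nat_mul, ← Real.exp_add]
        ring_nf
    _ ≤ 1 := by
        rw [Real.exp_le_one_iff, sub_nonpos, le_div_iff₀ (by linarith)]
        linarith

variable {ι : Type*} [Fintype ι] [DecidableEq ι] {p t : ℕ}

theorem momentBound_max_one_pow (hcard : 16 ≤ Fintype.card ι) (hp : 7 * p ≤ Fintype.card ι)
    (t : ℕ) :
    MomentBound ι p t (max 1 (Fintype.card ι ^ p * (1 - 1 / (2 * Fintype.card ι)) ^ t)) := by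
  have : Nonempty ι := Fintype.card_pos_iff.1 (by lia)
  have hd : (1 : ℝ) ≤ Fintype.card ι := mod_cast Fintype.card_pos
  have hρ : 0 ≤ 1 - 1 / (2 * (Fintype.card ι : ℝ)) :=
    sub_nonneg.2 (by rw [div_le_one (by linarith)]; linarith)
  induction t with
  | zero => exact (momentBound_zero p).mono (by simp)
  | succ t ih =>
    refine (ih.succ (zero_le_one.trans (le_max_left ..)) hcard hp).mono ?_
    rw [mul_max_of_nonneg _ _ hρ, pow_succ']
    refine max_le (le_max_left ..) (max_le (by simp) (le_max_of_le_right (le_of_eq ?_)))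
    ring

theorem momentBound_one (hcard : 16 ≤ Fintype.card ι) (hp : 7 * p ≤ Fintype.card ι)
    (ht : 2 * p * Fintype.card ι * Real.log (Fintype.card ι) ≤ t) : MomentBound ι p t 1 := by
  have h := momentBound_max_one_pow hcard hp t
  rwa [max_eq_left (pow_mul_one_sub_pow_le_one (mod_cast (by lia : 1 ≤ Fintype.card ι)) ht)] at h

/-- The bound of `ora_moment_mixing`, as `d` copies of the target size of a single power. -/
def momentTarget (d p : ℕ) : ℝ := d * ((2 / d) ^ p * (1 / 4 / p !))

theorem momentTarget_nonneg (d p : ℕ) : 0 ≤ momentTarget d p := by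
  unfold momentTarget
  positivity

theorem two_zpow_mul_zpow_div_factorial_eq_momentTarget {d : ℕ} (hd : d ≠ 0) (p : ℕ) :
    (2 : ℝ) ^ ((p : ℤ) - 2) * (d : ℝ) ^ ((1 : ℤ) - p) / (p.factorial : ℝ) = momentTarget d p := by
  have hd' : (d : ℝ) ≠ 0 := mod_cast hd
  rw [zpow_sub₀ two_ne_zero, zpow_sub₀ hd', momentTarget, div_pow]
  norm_num
  ring

theorem factorial_two_mul_mul_momentTarget_le_succ {d q : ℕ} (hd : d ≠ 0) (hq : d ≤ 8 * q + 4) :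
    (2 * q)! * momentTarget d q ≤ (2 * (q + 1))! * momentTarget d (q + 1) := by
  have hratio : ((2 * (q + 1))! : ℝ) * momentTarget d (q + 1) =
      (2 * q)! * momentTarget d q * ((8 * q + 4) / d) := by
    rw [momentTarget, momentTarget, mul_add_one 2 q, Nat.factorial_succ, Nat.factorial_succ,
      Nat.factorial_succ, pow_succ]
    push_cast
    field
  rw [hratio]
  refine le_mul_of_one_le_right (mul_nonneg (by positivity) (momentTarget_nonneg d q)) ?_
  rw [one_le_div (by positivity)]
  exact_mod_cast hq

theorem factorial_two_mul_mul_momentTarget_mono {d q p : ℕ} (hd : d ≠ 0) (hq : d ≤ 8 * q + 4)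
    (hqp : q ≤ p) : (2 * q)! * momentTarget d q ≤ (2 * p)! * momentTarget d p := by
  induction p, hqp using Nat.le_induction with
  | base => exact le_rfl
  | succ p hp ih => exact ih.trans (factorial_two_mul_mul_momentTarget_le_succ hd (by lia))

end MomentDecay

section PowerSums

open Finset Function
open scoped BigOperators Nat

variable {d p t : ℕ}

theorem Sk_one_le {x : Fin d → ℝ} (hx : x ∈ euclideanBall (Fin d)) : Sk 1 x ≤ 1 / 2 := by
  have h : ∑ i, x i ^ 2 ≤ 1 := hx
  norm_num [Sk]
  linarith

theorem factorial_two_mul_mul_Sk_antitone {q p : ℕ} (hqp : q ≤ p) {x : Fin d → ℝ}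
    (hx : x ∈ euclideanBall (Fin d)) : (2 * p)! * Sk p x ≤ (2 * q)! * Sk q x := by
  have hfac (k : ℕ) : (2 * k)! * Sk k x = ∑ i, (x i ^ 2) ^ k := by
    simp only [Sk, pow_mul]
    exact mul_inv_cancel_left₀ (by positivity) _
  rw [hfac, hfac]
  exact sum_le_sum fun i _ =>
    pow_le_pow_of_le_one (sq_nonneg _) (sq_le_one_of_mem_euclideanBall hx i) hqp

theorem evenMonomial_single (i : Fin d) (p : ℕ) (x : Fin d → ℝ) :
    evenMonomial (Pi.single i p) x = evenPow p (x i) := by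
  have h := prod_update_of_eq_one (fun k a => evenPow a (x k)) (x := 0) (i := i)
    (by simp [evenPow]) p
  refine h.trans ?_
  simp [evenPow]

theorem expWeight_single (i : Fin d) (p : ℕ) : expWeight (Pi.single i p) = partWeight p := by
  have h := prod_update_of_eq_one (fun _ : Fin d => partWeight) (x := 0) (i := i) partWeight_zero p
  refine h.trans ?_
  simp [partWeight_zero]

theorem Sk_eq_sum_symmMonomial (p : ℕ) :
    (Sk p : (Fin d → ℝ) → ℝ) = ∑ i, symmMonomial (Pi.single i p) := by
  have hmon : (Sk p : (Fin d → ℝ) → ℝ) = ∑ i, evenMonomial (Pi.single i p) := by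
    ext x
    simp [Sk, evenMonomial_single, evenPow, mul_sum, div_eq_inv_mul]
  have hsymm : symmetrize (Fin d) (Sk p) = Sk p := by
    ext x
    have hperm (σ : Equiv.Perm (Fin d)) : Sk p (x ∘ σ) = Sk p x :=
      congrArg (_ * ·) (Equiv.sum_comp σ fun i => x i ^ (2 * p))
    simp [symmetrize_apply, hperm]
  rw [← hsymm, hmon, map_sum]
  rfl

theorem oraOp_pow_Sk_le_of_seven_mul_le (hd : 16 ≤ d) (hp2 : 2 ≤ p) (hp : 7 * p ≤ d)
    (ht : 2 * p * d * Real.log d ≤ t) {x : Fin d → ℝ} (hx : x ∈ euclideanBall (Fin d)) :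
    (oraOp (Fin d) ^ t) (Sk p) x ≤ momentTarget d p := by
  have hbound : MomentBound (Fin d) p t 1 :=
    momentBound_one (by simpa using hd) (by simpa using hp) (by simpa using ht)
  have hterm (i : Fin d) : (oraOp (Fin d) ^ t) (symmMonomial (Pi.single i p)) x ≤
      (2 / d) ^ p * (1 / 4 / p !) := by
    have h := hbound (Pi.single i p) (by simp) x hx
    rwa [expWeight_single, partWeight, weightConst_of_two_le hp2, Fintype.sum_pi_single',
      Fintype.card_fin, mul_one] at h
  rw [Sk_eq_sum_symmMonomial, map_sum, Finset.sum_apply]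
  exact (sum_le_sum fun i _ => hterm i).trans_eq (by simp [momentTarget])

theorem oraOp_pow_Sk_one_le (hd : 2 ≤ d) (t : ℕ) {x : Fin d → ℝ}
    (hx : x ∈ euclideanBall (Fin d)) : (oraOp (Fin d) ^ t) (Sk 1) x ≤ momentTarget d 1 := by
  have : Nontrivial (Fin d) := Fin.nontrivial_iff_two_le.2 hd
  calc (oraOp (Fin d) ^ t) (Sk 1) x ≤ (oraOp (Fin d) ^ t) ((1 / 2 : ℝ) • 1) x :=
        oraOp_pow_mono (fun y hy => by simpa using Sk_one_le hy) t x hx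
    _ = momentTarget d 1 := by
        rw [map_smul, oraOp_pow_one, momentTarget]
        simp
        field

theorem oraOp_pow_Sk_le_of_le {q : ℕ} (hqp : q ≤ p) {x : Fin d → ℝ}
    (hx : x ∈ euclideanBall (Fin d)) :
    (2 * p)! * (oraOp (Fin d) ^ t) (Sk p) x ≤ (2 * q)! * (oraOp (Fin d) ^ t) (Sk q) x := by
  have h := oraOp_pow_mono (f := ((2 * p)! : ℝ) • Sk p) (g := ((2 * q)! : ℝ) • Sk q)
    (fun y hy => factorial_two_mul_mul_Sk_antitone hqp hy) t x hx
  simpa only [map_smul, Pi.smul_apply, smul_eq_mul] using h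

/-- Beyond `p ≈ d / 8` the bound follows from the one for `q ≈ d / 8`, since on the ball
`(2 * p)! * Sk p` decreases in `p` while `(2 * p)! * momentTarget d p` increases. -/
theorem oraOp_pow_Sk_le (hd : 16 ≤ d) (hp : 1 ≤ p) (ht : 2 * p * d * Real.log d ≤ t)
    {x : Fin d → ℝ} (hx : x ∈ euclideanBall (Fin d)) :
    (oraOp (Fin d) ^ t) (Sk p) x ≤ momentTarget d p := by
  obtain rfl | hp2 : p = 1 ∨ 2 ≤ p := by lia
  · exact oraOp_pow_Sk_one_le (by lia) t hx
  set q := min p ((d + 3) / 8)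
  have hqp : q ≤ p := min_le_left ..
  have htq : 2 * q * d * Real.log d ≤ t := by
    refine le_trans ?_ ht
    have := Real.log_natCast_nonneg d
    gcongr
  have hq := oraOp_pow_Sk_le_of_seven_mul_le hd (by lia) (by lia) htq hx
  obtain hpq | hqd : q = p ∨ d ≤ 8 * q + 4 := by lia
  · rwa [← hpq]
  refine le_of_mul_le_mul_left ?_ (by positivity : (0 : ℝ) < (2 * p)!)
  calc (2 * p)! * (oraOp (Fin d) ^ t) (Sk p) x ≤ (2 * q)! * (oraOp (Fin d) ^ t) (Sk q) x :=
        oraOp_pow_Sk_le_of_le hqp hx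
    _ ≤ (2 * q)! * momentTarget d q := by gcongr
    _ ≤ (2 * p)! * momentTarget d p :=
        factorial_two_mul_mul_momentTarget_mono (by lia) hqd hqp

end PowerSums

section RandomWalk

open Finset Function
open scoped BigOperators

variable {d : ℕ}

theorem rotM_mulVec {e : Fin d × Fin d} (he : e.1 ≠ e.2) (x : Fin d → ℝ) :
    (rotM d e.1 e.2 (π / 4)).mulVec x = oraStep e x := by
  ext k
  simp only [Matrix.mulVec, dotProduct, rotM, Matrix.of_apply, cos_pi_div_four, sin_pi_div_four]
  have hhalf (a : ℝ) : √2 / 2 * a = a / √2 := by rw [sqrt_div_self', one_div_mul_eq_div]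
  obtain rfl | h1 := eq_or_ne k e.1
  · rw [Fintype.sum_eq_add e.1 e.2 he fun l hl => by simp [hl.1, hl.2, hl.1.symm, he]]
    simp [oraStep, updatePair, he, he.symm, hhalf, sub_div, ← sub_eq_add_neg]
  · obtain rfl | h2 := eq_or_ne k e.2
    · rw [Fintype.sum_eq_add e.1 e.2 he fun l hl => by simp [hl.1, hl.2, hl.2.symm, he.symm]]
      simp [oraStep, updatePair, he.symm, hhalf, add_div]
    · simp [oraStep, updatePair, h1, h2]

theorem oraMatrix_cons_mulVec {t : ℕ} (e : Fin d × Fin d) (ω : Fin t → Fin d × Fin d)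
    (x : Fin d → ℝ) :
    (oraMatrix (Fin.cons e ω : Fin (t + 1) → Fin d × Fin d)).mulVec x =
      (oraMatrix ω).mulVec ((rotM d e.1 e.2 (π / 4)).mulVec x) := by
  simp [oraMatrix, List.ofFn_succ]

theorem pairUniform_eq_smul_restrict_offDiag (d : ℕ) :
    pairUniform d = (#(univ : Finset (Fin d)).offDiag : ℝ≥0∞)⁻¹ •
      Measure.count.restrict (univ : Finset (Fin d)).offDiag := by
  rw [pairUniform, offDiag_card, card_univ, Fintype.card_fin, Nat.mul_sub_one]
  congr 3
  ext e
  simp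

theorem isProbabilityMeasure_pairUniform (hd : 2 ≤ d) : IsProbabilityMeasure (pairUniform d) := by
  have hcard : #(univ : Finset (Fin d)).offDiag ≠ 0 := by
    rw [offDiag_card, card_univ, Fintype.card_fin, ← Nat.mul_sub_one]
    exact Nat.mul_ne_zero (by lia) (by lia)
  refine ⟨?_⟩
  rw [pairUniform_eq_smul_restrict_offDiag, Measure.smul_apply, Measure.restrict_apply_univ,
    Measure.count_apply_finset, smul_eq_mul]
  exact ENNReal.inv_mul_cancel (Nat.cast_ne_zero.2 hcard) (ENNReal.natCast_ne_top _)

theorem integral_pairUniform (f : Fin d × Fin d → ℝ) :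
    ∫ e, f e ∂pairUniform d = 𝔼 e ∈ univ.offDiag, f e := by
  rw [pairUniform_eq_smul_restrict_offDiag, integral_smul_measure,
    setIntegral_finset _ Integrable.of_finite.integrableOn, expect_eq_sum_div_card]
  simp [Measure.real, div_eq_inv_mul, mul_sum, -offDiag_card]

theorem integral_oraMatrix_mulVec [IsProbabilityMeasure (pairUniform d)] (f : (Fin d → ℝ) → ℝ)
    (t : ℕ) (x : Fin d → ℝ) :
    ∫ ω, f ((oraMatrix ω).mulVec x) ∂(Measure.pi fun _ : Fin t => pairUniform d) =
      (oraOp (Fin d) ^ t) f x := by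
  induction t generalizing x with
  | zero => simp [oraMatrix]
  | succ t ih =>
    rw [← ((measurePreserving_piFinSuccAbove (fun _ => pairUniform d) 0).symm).integral_comp',
      integral_prod _ Integrable.of_finite, oraOp_pow_succ_apply]
    simp only [MeasurableEquiv.piFinSuccAbove_symm_apply, Fin.insertNthEquiv, Equiv.coe_fn_mk,
      Fin.insertNth_zero', oraMatrix_cons_mulVec, ih]
    rw [integral_pairUniform]
    exact expect_congr rfl fun e he => by rw [rotM_mulVec (mem_offDiag.1 he).2.2]

theorem continuous_Sk (p : ℕ) : Continuous (Sk p : (Fin d → ℝ) → ℝ) := by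
  unfold Sk
  fun_prop

theorem integrable_comp_oraMatrix_mulVec {Ω : Type*} [MeasurableSpace Ω] (μ : Measure Ω)
    [IsFiniteMeasure μ] [IsProbabilityMeasure (pairUniform d)] {f : (Fin d → ℝ) → ℝ}
    (hf : Continuous f) {x : Ω → Fin d → ℝ} (hx : Measurable x)
    (hball : ∀ ω, x ω ∈ euclideanBall (Fin d)) (t : ℕ) :
    Integrable (fun z : (Fin t → Fin d × Fin d) × Ω => f ((oraMatrix z.1).mulVec (x z.2)))
      ((Measure.pi fun _ => pairUniform d).prod μ) := by
  have hcont (σ : Fin t → Fin d × Fin d) : Continuous fun y => f ((oraMatrix σ).mulVec y) :=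
    hf.comp (continuous_const.matrix_mulVec continuous_id)
  have hbound (σ : Fin t → Fin d × Fin d) :
      ∃ C, ∀ ω, ‖f ((oraMatrix σ).mulVec (x ω))‖ ≤ C := by
    obtain ⟨C, hC⟩ := (isCompact_closedBall (0 : Fin d → ℝ) 1).exists_bound_of_continuousOn
      (hcont σ).continuousOn
    refine ⟨C, fun ω => hC _ ?_⟩
    rw [mem_closedBall_zero_iff, pi_norm_le_iff_of_nonneg zero_le_one]
    exact fun i => (sq_le_one_iff_abs_le_one _).1 (sq_le_one_of_mem_euclideanBall (hball ω) i)
  choose C hC using hbound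
  obtain ⟨B, hB⟩ := Set.finite_range C |>.bddAbove
  refine .of_bound (measurable_from_prod_countable_right fun σ =>
    ((hcont σ).measurable.comp hx)).aestronglyMeasurable B (.of_forall fun z => ?_)
  exact (hC z.1 z.2).trans (hB (Set.mem_range_self _))

end RandomWalk

theorem ora_moment_mixing_general {d : ℕ} (hd : 16 ≤ d) {Ω : Type*} [MeasurableSpace Ω]
    (μ : Measure Ω) [IsProbabilityMeasure μ] {x : Ω → Fin d → ℝ} (hx : Measurable x)
    (hball : ∀ ω, ∑ i, x ω i ^ 2 ≤ 1) {p : ℕ} (hp : 1 ≤ p) {t : ℕ}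
    (ht : 2 * p * d * Real.log d ≤ t) :
    (∫ z, Sk p ((oraMatrix z.1).mulVec (x z.2))
        ∂((Measure.pi fun _ : Fin t => pairUniform d).prod μ)) ≤
      (2 : ℝ) ^ ((p : ℤ) - 2) * (d : ℝ) ^ ((1 : ℤ) - p) / (p.factorial : ℝ) := by
  have := isProbabilityMeasure_pairUniform (show 2 ≤ d by lia)
  have hint := integrable_comp_oraMatrix_mulVec μ (continuous_Sk p) hx hball t
  rw [two_zpow_mul_zpow_div_factorial_eq_momentTarget (by lia) p, integral_prod_symm _ hint]
  simp only [integral_oraMatrix_mulVec]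
  calc ∫ ω, (oraOp (Fin d) ^ t) (Sk p) (x ω) ∂μ ≤ ∫ _, momentTarget d p ∂μ := by
        refine integral_mono ?_ (integrable_const _) fun ω => oraOp_pow_Sk_le hd hp ht (hball ω)
        simpa only [integral_oraMatrix_mulVec] using hint.integral_prod_right
    _ = momentTarget d p := by simp

/-- **Proposition 4.3**: decay of the weighted moments `S_p` along orthogonal repeated
averaging, for a (possibly random) starting point on the sphere independent of the walk. -/
theorem ora_moment_mixing :
    ∃ C : ℝ, 0 < C ∧
      ∀ (d : ℕ), 25 ≤ d →
      ∀ {Ω : Type} [MeasurableSpace Ω] (μ : Measure Ω), IsProbabilityMeasure μ →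
      ∀ (x : Ω → Fin d → ℝ), Measurable x → (∀ ω, ∑ i, x ω i ^ 2 = 1) →
      ∀ p : ℕ, 1 ≤ p → p ≤ d →
      ∀ t : ℕ, C * p * d * Real.log d ≤ t →
      (∫ z, Sk p ((oraMatrix z.1).mulVec (x z.2))
          ∂((Measure.pi fun _ : Fin t => pairUniform d).prod μ)) ≤
        (2 : ℝ) ^ ((p : ℤ) - 2) * (d : ℝ) ^ ((1 : ℤ) - p) / (p.factorial : ℝ) := by
  refine ⟨2, two_pos, ?_⟩
  intro d hd Ω _ μ _ x hx hsphere p hp _ t ht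
  exact ora_moment_mixing_general (by lia) μ hx (fun ω => (hsphere ω).le) hp ht

end KacJL
end
end
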